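/- arXiv:math/0010234 — 5 statements merged into one kernel-verified Lean document; each statement's English description precedes it below -/
import Mathlib

section
/- For every infinite cardinal κ there exists a nondegenerate hereditarily indecomposable continuum H of weight at most κ such that every nondegenerate subcontinuum of H possesses an essential family of pairs of disjoint closed sets of cardinality κ. -/
open Set

/-- A space is *hereditarily indecomposable* if whenever two subcontinua
(nonempty compact connected subsets) intersect, one is contained in the other. -/
def HereditarilyIndecomposable (X : Type*) [TopologicalSpace X] : Prop :=
  ∀ C D : Set X, IsCompact C → IsConnected C → IsCompact D → IsConnected D →
    (C ∩ D).Nonempty → C ⊆ D ∨ D ⊆ C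

/-- `L` is a partition between `A` and `B`: a closed set whose complement is the
union of two disjoint open sets containing `A` and `B` respectively. -/
def IsPartitionBetween {X : Type*} [TopologicalSpace X] (L A B : Set X) : Prop :=
  IsClosed L ∧ ∃ U V : Set X, IsOpen U ∧ IsOpen V ∧ Disjoint U V ∧
    A ⊆ U ∧ B ⊆ V ∧ Lᶜ = U ∪ V

/-- A family of pairs of disjoint closed sets is *essential* if every choice of
partitions between the pairs has nonempty intersection. -/
def IsEssentialFamily {X : Type*} [TopologicalSpace X] {I : Type*} (A B : I → Set X) : Prop :=
  (∀ i, IsClosed (A i)) ∧ (∀ i, IsClosed (B i)) ∧ (∀ i, Disjoint (A i) (B i)) ∧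
    ∀ L : I → Set X, (∀ i, IsPartitionBetween (L i) (A i) (B i)) → (⋂ i, L i).Nonempty

/-- The weight of a topological space: the least cardinality of a base. -/
noncomputable def topWeight (X : Type*) [TopologicalSpace X] : Cardinal :=
  ⨅ B : {B : Set (Set X) // TopologicalSpace.IsTopologicalBasis B}, Cardinal.mk B.1



namespace HIC

theorem det_interp {E : Type*} [NormedAddCommGroup E] [NormedSpace ℝ E] [FiniteDimensional ℝ E]
    (v : ℕ → ℝ) (hv : Function.Injective v) :
    ∃ c : ℕ → ℝ, (∑ j ∈ Finset.range (Module.finrank ℝ E + 1), c j = 1) ∧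
      ∀ A : E →L[ℝ] E, (1 + A).det =
        ∑ j ∈ Finset.range (Module.finrank ℝ E + 1), c j * (1 + v j • A).det := by
  classical
  set n := Module.finrank ℝ E with hn
  set s := Finset.range (n + 1) with hs
  refine ⟨fun j => (Lagrange.basis s v j).eval 1, ?_, ?_⟩
  · rw [← Polynomial.eval_finsetSum, Lagrange.sum_basis hv.injOn ⟨0, by simp [hs]⟩]
    simp
  · intro A
    let b := Module.finBasis ℝ E
    let M : Matrix (Fin n) (Fin n) ℝ := LinearMap.toMatrix b b (A : E →ₗ[ℝ] E)
    let P : Polynomial ℝ :=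
      ((Polynomial.X : Polynomial ℝ) • M.map (⇑Polynomial.C) + (1 : Matrix (Fin n) (Fin n) ℝ).map (⇑Polynomial.C)).det
    have hP : ∀ t : ℝ, P.eval t = (1 + t • A).det := by
      intro t
      have h1 : (1 + t • A).det = (1 + t • M).det := by
        rw [ContinuousLinearMap.det, ← LinearMap.det_toMatrix b]
        congr 1
        have : ((1 + t • A : E →L[ℝ] E) : E →ₗ[ℝ] E) = LinearMap.id + t • (A : E →ₗ[ℝ] E) := by
          ext x; simp
        rw [this, map_add, map_smul, LinearMap.toMatrix_id]
      rw [h1]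
      simp only [P]
      rw [← Polynomial.coe_evalRingHom, RingHom.map_det]
      congr 1
      ext i j
      simp [Matrix.one_apply, add_comm]
      split_ifs <;> simp [mul_comm]
    have hdeg : P.degree < (s.card : WithBot ℕ) := by
      have := Polynomial.natDegree_det_X_add_C_le M (1 : Matrix (Fin n) (Fin n) ℝ)
      rw [Fintype.card_fin] at this
      refine lt_of_le_of_lt Polynomial.degree_le_natDegree ?_
      simp only [hs, Finset.card_range]
      exact_mod_cast Nat.lt_succ_of_le this
    have h2 := Lagrange.eq_interpolate (v := v) (s := s) hv.injOn hdeg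
    have h3 := hP 1
    rw [one_smul] at h3
    rw [← h3]
    conv_lhs => rw [h2, Lagrange.interpolate_apply, Polynomial.eval_finsetSum]
    refine Finset.sum_congr rfl fun j _ => ?_
    rw [Polynomial.eval_mul, Polynomial.eval_C, hP, mul_comm]

theorem det_pos_of_small {E : Type*} [NormedAddCommGroup E] [NormedSpace ℝ E]
    [FiniteDimensional ℝ E] (A : E →L[ℝ] E) (hA : ‖A‖ < 1) : 0 < (1 + A).det := by
  have hne : ∀ s ∈ Icc (0:ℝ) 1, (1 + s • A).det ≠ 0 := by
    intro s hs h0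
    have hlt : ‖s • A‖ < 1 := by
      rw [norm_smul, Real.norm_of_nonneg hs.1]
      nlinarith [norm_nonneg A, hs.1, hs.2]
    have : ∃ x : E, x ≠ 0 ∧ (1 + s • A) x = 0 := by
      by_contra hcon
      push Not at hcon
      have hinj : LinearMap.ker ((1 + s • A : E →L[ℝ] E) : E →ₗ[ℝ] E) = ⊥ := by
        rw [LinearMap.ker_eq_bot']
        intro m hm
        by_contra hm0
        exact hcon m hm0 hm
      have hu := (LinearMap.isUnit_iff_ker_eq_bot _).2 hinj
      have := LinearMap.isUnit_det _ hu
      exact this.ne_zero h0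
    obtain ⟨x, hx, hx0⟩ := this
    have hx1 : x = - (s • A) x := by
      have : x + (s • A) x = 0 := by simpa using hx0
      exact eq_neg_of_add_eq_zero_left this
    have : ‖x‖ ≤ ‖s • A‖ * ‖x‖ := by
      conv_lhs => rw [hx1, norm_neg]
      exact ContinuousLinearMap.le_opNorm _ _
    have hxp := norm_pos_iff.2 hx
    nlinarith
  have hcont : Continuous fun s : ℝ => (1 + s • A).det := by
    have := ContinuousLinearMap.continuous_det (𝕜 := ℝ) (E := E)
    exact this.comp (by fun_prop)
  by_contra hneg
  push Not at hneg
  have h01 : (0:ℝ) ∈ Icc ((fun s : ℝ => (1 + s • A).det) 1) ((fun s : ℝ => (1 + s • A).det) 0) := by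
    constructor
    · simpa using hneg
    · simp only [zero_smul, add_zero]
      have : (1 : E →L[ℝ] E).det = 1 := by
        simp [ContinuousLinearMap.det]
      rw [this]; norm_num
  obtain ⟨s, hs, h⟩ := intermediate_value_Icc' (zero_le_one) hcont.continuousOn h01
  exact hne s hs h

end HIC


namespace HIC
open MeasureTheory Metric

theorem no_retract {E : Type*} [NormedAddCommGroup E] [InnerProductSpace ℝ E]
    [FiniteDimensional ℝ E] [MeasurableSpace E] [BorelSpace E]
    (r : E → E) (U : Set E) (hU : IsOpen U) (hBU : closedBall (0:E) 1 ⊆ U)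
    (hr : ContDiffOn ℝ 1 r U) (hnorm : ∀ x ∈ closedBall (0:E) 1, ‖r x‖ = 1)
    (hfix : ∀ x : E, ‖x‖ = 1 → r x = x) : False := by
  have : ProperSpace E := FiniteDimensional.proper_real E
  set g : E → E := fun x => r x - x with hg
  have hgU : ContDiffOn ℝ 1 g U := hr.sub contDiffOn_id
  set G : E → E →L[ℝ] E := fun x => fderiv ℝ g x with hG
  have hGc : ContinuousOn G U := hgU.continuousOn_fderiv_of_isOpen hU le_rfl
  have hgd : ∀ x ∈ U, HasStrictFDerivAt g (G x) x := fun x hx =>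
    (hgU.contDiffAt (hU.mem_nhds hx)).hasStrictFDerivAt one_ne_zero
  have hBc : IsCompact (closedBall (0:E) 1) := isCompact_closedBall 0 1
  obtain ⟨L, hL⟩ := hBc.exists_bound_of_continuousOn (hGc.mono hBU)
  set K := max L 0 with hK
  have hK0 : 0 ≤ K := le_max_right _ _
  have hLK : ∀ x ∈ closedBall (0:E) 1, ‖G x‖ ≤ K := fun x hx => (hL x hx).trans (le_max_left _ _)
  have hlip : ∀ x ∈ closedBall (0:E) 1, ∀ y ∈ closedBall (0:E) 1, ‖g y - g x‖ ≤ K * ‖y - x‖ := by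
    intro x hx y hy
    exact (convex_closedBall (0:E) 1).norm_image_sub_le_of_norm_fderiv_le
      (fun z hz => (hgd z (hBU hz)).hasFDerivAt.differentiableAt) hLK hx hy
  have hOB : ball (0:E) 1 ⊆ closedBall (0:E) 1 := ball_subset_closedBall
  -- small parameter
  have key : ∀ t : ℝ, 0 < t → t < 1 → t * K < 1 →
      ∫ x in ball (0:E) 1, (1 + t • G x).det = volume.real (ball (0:E) 1) := by
    intro t ht0 ht1 htK
    set f : E → E := fun x => x + t • g x with hf
    have hfd : ∀ x ∈ U, HasStrictFDerivAt f (1 + t • G x) x := fun x hx =>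
      (hasStrictFDerivAt_id x).add ((hgd x hx).const_smul t)
    have hdet : ∀ x ∈ closedBall (0:E) 1, 0 < (1 + t • G x).det := by
      intro x hx
      apply det_pos_of_small
      rw [norm_smul, Real.norm_of_nonneg ht0.le]
      nlinarith [hLK x hx]
    have hinj : InjOn f (ball (0:E) 1) := by
      intro x hx y hy hxy
      by_contra hne
      have hp : 0 < ‖y - x‖ := norm_pos_iff.2 (sub_ne_zero.2 (Ne.symm hne))
      have h1 : y - x = - (t • (g y - g x)) := by
        have : x + t • g x = y + t • g y := hxy
        rw [smul_sub, neg_sub]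
        rw [sub_eq_sub_iff_add_eq_add, ← this, add_comm]
      have h2 : ‖y - x‖ ≤ t * (K * ‖y - x‖) := by
        conv_lhs => rw [h1, norm_neg, norm_smul, Real.norm_of_nonneg ht0.le]
        exact mul_le_mul_of_nonneg_left (hlip x (hOB hx) y (hOB hy)) ht0.le
      nlinarith
    have hmaps : f '' ball (0:E) 1 ⊆ ball (0:E) 1 := by
      rintro _ ⟨x, hx, rfl⟩
      have h1 : f x = (1 - t) • x + t • r x := by
        simp only [hf, hg, smul_sub, sub_smul, one_smul]; abel
      rw [mem_ball_zero_iff] at hx ⊢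
      rw [h1]
      calc ‖(1 - t) • x + t • r x‖ ≤ ‖(1 - t) • x‖ + ‖t • r x‖ := norm_add_le _ _
        _ = (1 - t) * ‖x‖ + t * 1 := by
            rw [norm_smul, norm_smul, hnorm x (by simpa using hx.le), Real.norm_of_nonneg ht0.le,
              Real.norm_of_nonneg (by linarith)]
        _ < 1 := by nlinarith
    have hopen : IsOpen (f '' ball (0:E) 1) := by
      rw [isOpen_iff_mem_nhds]
      rintro _ ⟨x, hx, rfl⟩
      have hs := (hfd x (hBU (hOB hx))).map_nhds_eq_of_surj (by
        have hu : IsUnit (LinearMap.det ((1 + t • G x : E →L[ℝ] E) : E →ₗ[ℝ] E)) :=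
          isUnit_iff_ne_zero.2 (hdet x (hOB hx)).ne'
        exact (LinearMap.isUnit_iff_range_eq_top _).1 ((LinearMap.isUnit_iff_isUnit_det _).2 hu))
      rw [← hs]
      exact Filter.image_mem_map (isOpen_ball.mem_nhds hx)
    have himg : f '' ball (0:E) 1 = ball (0:E) 1 := by
      refine Subset.antisymm hmaps ?_
      refine (convex_ball (0:E) 1).isPreconnected.subset_of_closure_inter_subset hopen ?_ ?_
      · exact ⟨f 0, hmaps ⟨0, by simp, rfl⟩, ⟨0, by simp, rfl⟩⟩
      · rintro y ⟨hy1, hy2⟩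
        have hcont : ContinuousOn f (closedBall (0:E) 1) := fun x hx =>
          (hfd x (hBU hx)).continuousAt.continuousWithinAt
        have hcl : closure (f '' ball (0:E) 1) ⊆ f '' closedBall (0:E) 1 :=
          closure_minimal (image_mono hOB) (hBc.image_of_continuousOn hcont).isClosed
        obtain ⟨x, hx, rfl⟩ := hcl hy1
        refine ⟨x, ?_, rfl⟩
        rw [mem_closedBall_zero_iff] at hx
        rw [mem_ball_zero_iff] at hy2 ⊢
        refine lt_of_le_of_ne hx fun h1 => ?_
        have : f x = x := by simp [hf, hg, hfix x h1]
        rw [this] at hy2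
        linarith
    have hcv := integral_image_eq_integral_abs_det_fderiv_smul (volume : Measure E)
      (s := ball (0:E) 1) (f := f) (f' := fun x => 1 + t • G x) measurableSet_ball
      (fun x hx => (hfd x (hBU (hOB hx))).hasFDerivAt.hasFDerivWithinAt) hinj (fun _ => (1:ℝ))
    rw [himg] at hcv
    simp only [smul_eq_mul, mul_one, integral_const, MeasurableSet.univ, measureReal_restrict_apply,
      univ_inter] at hcv
    rw [hcv]
    refine setIntegral_congr_fun measurableSet_ball fun x hx => ?_
    exact (abs_of_pos (hdet x (hOB hx))).symm
  -- interpolation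
  set v : ℕ → ℝ := fun j => 1 / ((K + 1) * (j + 2)) with hv
  have hv0 : ∀ j, 0 < v j := fun j => by positivity
  have hv1 : ∀ j, v j < 1 := fun j => by
    simp only [hv]
    rw [div_lt_one (by positivity)]
    nlinarith [(Nat.cast_nonneg j : (0:ℝ) ≤ j)]
  have hvK : ∀ j, v j * K < 1 := fun j => by
    simp only [hv]
    rw [div_mul_eq_mul_div, div_lt_one (by positivity)]
    nlinarith [(Nat.cast_nonneg j : (0:ℝ) ≤ j)]
  have hvinj : Function.Injective v := by
    intro i j hij
    simp only [hv] at hij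
    have h1 : (K + 1) * ((i:ℝ) + 2) = (K + 1) * ((j:ℝ) + 2) := by
      have := congrArg (fun z : ℝ => z⁻¹) hij
      simpa using this
    have h2 := mul_left_cancel₀ (by positivity : K + 1 ≠ 0) h1
    exact_mod_cast add_right_cancel h2
  obtain ⟨c, hc1, hc⟩ := det_interp (E := E) v hvinj
  have hIntg : ∀ t : ℝ, IntegrableOn (fun x => (1 + t • G x).det) (ball (0:E) 1) := by
    intro t
    refine IntegrableOn.mono_set ?_ hOB
    refine ContinuousOn.integrableOn_compact hBc ?_
    have := ContinuousLinearMap.continuous_det (𝕜 := ℝ) (E := E)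
    refine this.comp_continuousOn ?_
    exact continuousOn_const.add ((hGc.mono hBU).const_smul t)
  have h1 : ∫ x in ball (0:E) 1, (1 + G x).det = volume.real (ball (0:E) 1) := by
    rw [integral_congr_ae (Filter.Eventually.of_forall fun x => hc (G x))]
    rw [integral_finsetSum _ (fun j _ => (hIntg (v j)).const_mul _)]
    simp_rw [integral_const_mul]
    rw [Finset.sum_congr rfl (fun j _ => by rw [key (v j) (hv0 j) (hv1 j) (hvK j)]),
      ← Finset.sum_mul, hc1, one_mul]
  have h2 : ∫ x in ball (0:E) 1, (1 + G x).det = 0 := by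
    rw [setIntegral_congr_fun (g := fun _ => (0:ℝ)) measurableSet_ball]
    · simp
    intro x hx
    by_contra hne
    have hu : IsUnit (LinearMap.det ((1 + G x : E →L[ℝ] E) : E →ₗ[ℝ] E)) :=
      isUnit_iff_ne_zero.2 hne
    have hsurj := (LinearMap.isUnit_iff_range_eq_top _).1 ((LinearMap.isUnit_iff_isUnit_det _).2 hu)
    have hrd : HasFDerivAt r (1 + G x) x := by
      have h := (hasFDerivAt_id x).add (hgd x (hBU (hOB hx))).hasFDerivAt
      refine h.congr_of_eventuallyEq (Filter.Eventually.of_forall fun y => ?_)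
      simp [hg]
    have hconst : HasFDerivAt (fun y => ‖r y‖ ^ 2) (0 : E →L[ℝ] ℝ) x := by
      refine (hasFDerivAt_const (1:ℝ) x).congr_of_eventuallyEq ?_
      filter_upwards [isOpen_ball.mem_nhds hx] with y hy
      rw [hnorm y (hOB hy)]; norm_num
    have hder := hrd.norm_sq
    have huniq := hder.unique hconst
    obtain ⟨w, hw⟩ : ∃ w, (1 + G x) w = r x := by
      have : r x ∈ LinearMap.range ((1 + G x : E →L[ℝ] E) : E →ₗ[ℝ] E) := by
        rw [hsurj]; trivial
      exact this
    have := congrArg (fun T : E →L[ℝ] ℝ => T w) huniq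
    simp only [smul_apply, ContinuousLinearMap.comp_apply, hw,
      innerSL_apply_apply, zero_apply, real_inner_self_eq_norm_sq,
      hnorm x (hOB hx)] at this
    norm_num at this
  have hpos : 0 < volume.real (ball (0:E) 1) :=
    ENNReal.toReal_pos (measure_ball_pos _ _ one_pos).ne' measure_ball_lt_top.ne
  linarith

end HIC


namespace HIC
open MeasureTheory Metric

/-- Brouwer for smooth maps of the unit ball. -/
theorem brouwer_smooth {E : Type*} [NormedAddCommGroup E] [InnerProductSpace ℝ E]
    [FiniteDimensional ℝ E] (f : E → E) (hf : ContDiff ℝ 1 f)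
    (hb : ∀ x, ‖f x‖ ≤ 1) : ∃ x ∈ closedBall (0:E) 1, f x = x := by
  by_contra hcon
  push Not at hcon
  borelize E
  set u : E → E := fun x => x - f x with hu
  have hud : ContDiff ℝ 1 u := contDiff_id.sub hf
  set N : E → ℝ := fun x => ‖u x‖ ^ 2 with hN
  have hNd : ContDiff ℝ 1 N := hud.norm_sq ℝ
  set b : E → ℝ := fun x => inner ℝ x (u x) with hbdef
  have hbd : ContDiff ℝ 1 b := contDiff_id.inner ℝ hud
  set disc : E → ℝ := fun x => b x ^ 2 + N x * (1 - ‖x‖ ^ 2) with hdisc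
  have hdd : ContDiff ℝ 1 disc :=
    (hbd.pow 2).add (hNd.mul (contDiff_const.sub (contDiff_id.norm_sq ℝ)))
  set U : Set E := {x | 0 < disc x} ∩ {x | 0 < N x} with hUdef
  have hU : IsOpen U :=
    (isOpen_lt continuous_const hdd.continuous).inter (isOpen_lt continuous_const hNd.continuous)
  have hsph : ∀ x : E, ‖x‖ = 1 → f x ≠ x → 0 < b x := by
    intro x hx hne
    have h1 : b x = 1 - inner ℝ x (f x) := by
      simp only [hbdef, hu, inner_sub_right, real_inner_self_eq_norm_sq, hx]; norm_num
    have h2 : ‖x - f x‖ ^ 2 = ‖x‖ ^ 2 - 2 * inner ℝ x (f x) + ‖f x‖ ^ 2 := norm_sub_sq_real _ _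
    have h3 : 0 < ‖x - f x‖ := norm_pos_iff.2 (sub_ne_zero.2 (Ne.symm hne))
    have h4 := hb x
    rw [hx] at h2
    rw [h1]
    nlinarith [norm_nonneg (f x)]
  have hNpos : ∀ x ∈ closedBall (0:E) 1, 0 < N x := by
    intro x hx
    have : 0 < ‖u x‖ := norm_pos_iff.2 (sub_ne_zero.2 (Ne.symm (hcon x hx)))
    simp only [hN]; positivity
  have hBU : closedBall (0:E) 1 ⊆ U := by
    intro x hx
    refine ⟨?_, hNpos x hx⟩
    have hn := hNpos x hx
    have hx1 : ‖x‖ ≤ 1 := by simpa using hx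
    simp only [mem_ofPred_eq, hdisc]
    rcases hx1.lt_or_eq with h | h
    · have : 0 < 1 - ‖x‖ ^ 2 := by nlinarith [norm_nonneg x]
      nlinarith [mul_pos hn this, sq_nonneg (b x)]
    · have := hsph x h (hcon x hx)
      rw [h]; nlinarith [mul_pos this this]
  set s : E → ℝ := fun x => (- b x + Real.sqrt (disc x)) / N x with hs
  have hsd : ContDiffOn ℝ 1 s U := by
    refine ContDiffOn.div ?_ hNd.contDiffOn (fun x hx => hx.2.ne')
    exact hbd.neg.contDiffOn.add (hdd.contDiffOn.sqrt (fun x hx => hx.1.ne'))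
  refine no_retract (fun x => x + s x • u x) U hU hBU ?_ ?_ ?_
  · exact contDiffOn_id.add (hsd.smul hud.contDiffOn)
  · intro x hx
    have hxU := hBU hx
    have hn := hNpos x hx
    have h1 : ‖x + s x • u x‖ ^ 2 = 1 := by
      rw [norm_add_sq_real, norm_smul, inner_smul_right, mul_pow, Real.norm_eq_abs, sq_abs]
      have e1 : s x * N x = - b x + Real.sqrt (disc x) := by
        simp only [hs]; field_simp
      have e2 : Real.sqrt (disc x) ^ 2 = disc x := Real.sq_sqrt hxU.1.le
      have e3 : (s x * N x + b x) ^ 2 = disc x := by rw [e1, neg_add_eq_sub, sub_add_cancel, e2]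
      simp only [hdisc] at e3
      change ‖x‖ ^ 2 + 2 * (s x * b x) + s x ^ 2 * N x = 1
      have e4 : N x * (‖x‖ ^ 2 + 2 * (s x * b x) + s x ^ 2 * N x - 1) = 0 := by linarith
      have := (mul_eq_zero.1 e4).resolve_left hn.ne'
      linarith
    have h2 := norm_nonneg (x + s x • u x)
    nlinarith
  · intro x hx
    have hxB : x ∈ closedBall (0:E) 1 := by simp [hx]
    have hbp := hsph x hx (hcon x hxB)
    have : s x = 0 := by
      simp only [hs, hdisc, hx]
      norm_num
      left
      rw [Real.sqrt_sq hbp.le]; ring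
    simp [this]

theorem brouwer_ball {E : Type*} [NormedAddCommGroup E] [InnerProductSpace ℝ E]
    [FiniteDimensional ℝ E] (f : E → E) (hf : Continuous f)
    (hb : ∀ x, ‖f x‖ ≤ 1) : ∃ x, f x = x := by
  by_contra hcon
  push Not at hcon
  have : ProperSpace E := FiniteDimensional.proper_real E
  obtain ⟨x₀, hx₀, hmin⟩ := (isCompact_closedBall (0:E) 1).exists_isMinOn ⟨0, by simp⟩
    (f := fun x => ‖f x - x‖) (by fun_prop)
  set ε := ‖f x₀ - x₀‖ with hε
  have hεp : 0 < ε := norm_pos_iff.2 (sub_ne_zero.2 (hcon x₀))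
  obtain ⟨g, hg, hgf⟩ := Continuous.exists_contDiff_approx 1 hf
    (ε := fun _ => ε / 4) continuous_const (fun _ => by positivity)
  have hgf' : ∀ x, ‖g x - f x‖ < ε / 4 := fun x => by
    have := hgf.1 x
    rwa [dist_eq_norm] at this
  have hgn : ∀ x, ‖g x‖ ≤ 1 + ε / 4 := fun x => by
    have := norm_add_le (g x - f x) (f x)
    rw [sub_add_cancel] at this
    linarith [hgf' x, hb x]
  have hc : 0 < 1 + ε / 4 := by positivity
  obtain ⟨x, hx, hfx⟩ := brouwer_smooth (fun x => (1 + ε / 4)⁻¹ • g x)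
    (hg.const_smul _) (fun x => by
      rw [norm_smul, norm_inv, Real.norm_of_nonneg hc.le, inv_mul_le_iff₀ hc, mul_one]
      exact hgn x)
  have h1 : g x = (1 + ε / 4) • x := by
    conv_rhs => rw [← hfx, smul_smul, mul_inv_cancel₀ hc.ne', one_smul]
  have h2 : ‖g x - x‖ ≤ ε / 4 := by
    rw [h1, add_smul, one_smul, add_sub_cancel_left, norm_smul, Real.norm_of_nonneg (by positivity)]
    have : ‖x‖ ≤ 1 := by simpa using hx
    nlinarith
  have h3 : ε ≤ ‖f x - x‖ := hmin hx
  have h4 : ‖f x - x‖ ≤ ‖g x - f x‖ + ‖g x - x‖ := by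
    rw [norm_sub_rev (g x) (f x)]
    have := norm_add_le (f x - g x) (g x - x)
    rwa [sub_add_sub_cancel] at this
  linarith [hgf' x]

/-- clamp to the unit interval -/
noncomputable def clamp (v : ℝ) : ℝ := max 0 (min 1 v)

theorem clamp_mem (v : ℝ) : clamp v ∈ Icc (0:ℝ) 1 :=
  ⟨le_max_left _ _, max_le zero_le_one (min_le_left _ _)⟩

theorem clamp_of_mem {v : ℝ} (h : v ∈ Icc (0:ℝ) 1) : clamp v = v := by
  rw [clamp, min_eq_right h.2, max_eq_right h.1]

@[fun_prop]
theorem continuous_clamp : Continuous clamp := by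
  unfold clamp; fun_prop

theorem clamp_eq_zero {v : ℝ} : clamp v = 0 ↔ v ≤ 0 := by
  unfold clamp; grind

theorem clamp_eq_one {v : ℝ} : clamp v = 1 ↔ 1 ≤ v := by
  unfold clamp; grind

/-- Poincaré–Miranda on a finite cube. -/
theorem miranda_finite {ι : Type*} [Fintype ι] (h : ι → (ι → ℝ) → ℝ)
    (hc : ∀ i, Continuous (h i))
    (h0 : ∀ i x, (∀ j, x j ∈ Icc (0:ℝ) 1) → x i = 0 → h i x ≤ 0)
    (h1 : ∀ i x, (∀ j, x j ∈ Icc (0:ℝ) 1) → x i = 1 → 0 ≤ h i x) :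
    ∃ x : ι → ℝ, (∀ j, x j ∈ Icc (0:ℝ) 1) ∧ ∀ i, h i x = 0 := by
  -- work on the Euclidean space, scaled
  set R : ℝ := Real.sqrt (Fintype.card ι) + 1 with hR
  have hR0 : 0 < R := by positivity
  let P : EuclideanSpace ℝ ι → ι → ℝ := fun x j => clamp (R * x j)
  have hP : Continuous P := by
    refine continuous_pi fun j => ?_
    simp only [P]; fun_prop
  let F : EuclideanSpace ℝ ι → EuclideanSpace ℝ ι := fun x =>
    WithLp.toLp 2 fun j => R⁻¹ * clamp (P x j - h j (P x))
  have hF : Continuous F := by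
    refine (PiLp.continuous_toLp 2 _).comp (continuous_pi fun j => ?_)
    have := (hc j).comp hP
    have h2 := (continuous_apply j).comp hP
    exact continuous_const.mul (continuous_clamp.comp (h2.sub this))
  obtain ⟨x, hx⟩ := brouwer_ball F hF (fun x => by
    rw [EuclideanSpace.norm_eq]
    refine Real.sqrt_le_one.2 ?_
    calc ∑ i, ‖F x i‖ ^ 2 ≤ ∑ i : ι, (R⁻¹) ^ 2 := by
          refine Finset.sum_le_sum fun i _ => ?_
          have hm := clamp_mem (P x i - h i (P x))
          simp only [F]
          rw [norm_mul, mul_pow, Real.norm_of_nonneg (by positivity : 0 ≤ R⁻¹),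
            Real.norm_of_nonneg hm.1]
          have : clamp (P x i - h i (P x)) ^ 2 ≤ 1 := by nlinarith [hm.1, hm.2]
          nlinarith [sq_nonneg (R⁻¹)]
      _ = Fintype.card ι * (R⁻¹) ^ 2 := by simp
      _ ≤ 1 := by
          rw [inv_pow, ← div_eq_mul_inv, div_le_one (by positivity)]
          have := Real.sq_sqrt (Nat.cast_nonneg (Fintype.card ι) : (0:ℝ) ≤ _)
          nlinarith [Real.sqrt_nonneg (Fintype.card ι : ℝ)])
  have hxj : ∀ j, R * x j = clamp (P x j - h j (P x)) := by
    intro j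
    have : x j = R⁻¹ * clamp (P x j - h j (P x)) := by
      conv_lhs => rw [← hx]
    rw [this, ← mul_assoc, mul_inv_cancel₀ hR0.ne', one_mul]
  have hPx : ∀ j, P x j = clamp (P x j - h j (P x)) := by
    intro j
    conv_lhs => simp only [P]
    rw [hxj, clamp_of_mem (clamp_mem _)]
  have hmem : ∀ j, P x j ∈ Icc (0:ℝ) 1 := fun j => clamp_mem _
  refine ⟨P x, hmem, fun i => ?_⟩
  have e := hPx i
  have a0 := h0 i (P x) hmem
  have a1 := h1 i (P x) hmem
  have m := hmem i
  generalize P x i = p at *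
  generalize h i (P x) = q at *
  unfold clamp at e
  grind

/-- Poincaré–Miranda on an arbitrary cube. -/
theorem miranda {ι : Type*} (h : ι → (ι → ℝ) → ℝ)
    (hc : ∀ i, Continuous (h i))
    (h0 : ∀ i x, (∀ j, x j ∈ Icc (0:ℝ) 1) → x i = 0 → h i x ≤ 0)
    (h1 : ∀ i x, (∀ j, x j ∈ Icc (0:ℝ) 1) → x i = 1 → 0 ≤ h i x) :
    ∃ x : ι → ℝ, (∀ j, x j ∈ Icc (0:ℝ) 1) ∧ ∀ i, h i x = 0 := by
  classical
  have hcomp : IsCompact (Set.univ.pi fun _ : ι => Icc (0:ℝ) 1) :=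
    isCompact_univ_pi fun _ => isCompact_Icc
  obtain ⟨x, hx, hx'⟩ := hcomp.inter_iInter_nonempty (fun i => {x | h i x = 0})
    (fun i => isClosed_eq (hc i) continuous_const) (by
      intro s
      let ext : (s → ℝ) → ι → ℝ := fun y j => if hj : j ∈ s then y ⟨j, hj⟩ else 0
      have hext : Continuous ext := by
        refine continuous_pi fun j => ?_
        by_cases hj : j ∈ s
        · simp only [ext, hj, dite_true]; fun_prop
        · simp only [ext, hj, dite_false]; fun_prop
      have hmem : ∀ y : s → ℝ, (∀ j, y j ∈ Icc (0:ℝ) 1) → ∀ j, ext y j ∈ Icc (0:ℝ) 1 := by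
        intro y hy j
        by_cases hj : j ∈ s
        · simp only [ext, hj, dite_true]; exact hy _
        · simp only [ext, hj, dite_false]; simp
      have hval : ∀ (y : s → ℝ) (i : s), ext y i = y i := fun y i => by simp [ext]
      obtain ⟨y, hy, hy'⟩ := miranda_finite (fun (i : s) y => h i (ext y))
        (fun i => (hc i).comp hext)
        (fun i y hy hi => h0 i _ (hmem y hy) (by rw [hval, hi]))
        (fun i y hy hi => h1 i _ (hmem y hy) (by rw [hval, hi]))
      refine ⟨ext y, fun j _ => hmem y hy j, ?_⟩
      simp only [mem_iInter, mem_ofPred_eq]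
      exact fun i hi => hy' ⟨i, hi⟩)
  rw [mem_iInter] at hx'
  exact ⟨x, fun j => hx j trivial, hx'⟩

end HIC


namespace HIC

/-- Formal terms naming continuous functions into the unit interval. -/
inductive Tm (K : Type) : Type
  | star : Tm K
  | lin (a b c : ℚ) (f g : Tm K) : Tm K
  | z (f : Tm K) : Tm K
  | y (f : Tm K) (i : K) : Tm K
  | p (s : Finset K) (f : Tm K) (g : {i // i ∈ s} → Tm K) : Tm K

/-- operation symbols, used only to bound the number of terms -/
abbrev Op (K : Type) : Type := (Unit ⊕ (ℚ × ℚ × ℚ)) ⊕ (Unit ⊕ K) ⊕ Finset K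

/-- arities of the operation symbols -/
def arity (K : Type) : Op K → Type
  | .inl (.inl _) => Empty
  | .inl (.inr _) => Bool
  | .inr (.inl _) => Unit
  | .inr (.inr s) => Option {i // i ∈ s}

instance (K : Type) (o : Op K) : Finite (arity K o) := by
  rcases o with ((_ | _) | (_ | s)) <;> simp only [arity] <;> infer_instance

/-- encoding terms as trees -/
def toW {K : Type} : Tm K → WType (arity K)
  | .star => ⟨.inl (.inl ()), fun d => Empty.elim d⟩
  | .lin a b c f g => ⟨.inl (.inr (a, b, c)), fun d => Bool.rec (toW f) (toW g) d⟩
  | .z f => ⟨.inr (.inl (.inl ())), fun _ => toW f⟩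
  | .y f i => ⟨.inr (.inl (.inr i)), fun _ => toW f⟩
  | .p s f g => ⟨.inr (.inr s), fun o => Option.rec (toW f) (fun i => toW (g i)) o⟩

theorem toW_injective {K : Type} : Function.Injective (toW (K := K)) := by
  intro t
  induction t with
  | star => intro t' h; cases t' <;> first | rfl | (simp [toW] at h)
  | lin a b c f g hf hg =>
    intro t' h
    cases t' <;> simp only [toW, WType.mk.injEq, Sum.inl.injEq, Sum.inr.injEq, reduceCtorEq,
      false_and, Prod.mk.injEq] at h
    obtain ⟨⟨rfl, rfl, rfl⟩, h1⟩ := h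
    have h2 := eq_of_heq h1
    rw [hf (congrFun h2 false), hg (congrFun h2 true)]
  | z f hf =>
    intro t' h
    cases t' <;> simp only [toW, WType.mk.injEq, Sum.inl.injEq, Sum.inr.injEq, reduceCtorEq,
      false_and, true_and] at h
    have h2 := eq_of_heq h
    rw [hf (congrFun h2 ())]
  | y f i hf =>
    intro t' h
    cases t' <;> simp only [toW, WType.mk.injEq, Sum.inl.injEq, Sum.inr.injEq, reduceCtorEq,
      false_and] at h
    obtain ⟨rfl, h1⟩ := h
    have h2 := eq_of_heq h1
    rw [hf (congrFun h2 ())]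
  | p s f g hf hg =>
    intro t' h
    cases t' <;> simp only [toW, WType.mk.injEq, Sum.inl.injEq, Sum.inr.injEq, reduceCtorEq,
      false_and] at h
    obtain ⟨rfl, h1⟩ := h
    have h2 := eq_of_heq h1
    rw [hf (congrFun h2 none)]
    congr 1
    funext i
    exact hg i (congrFun h2 (some i))

theorem mk_Tm_le (K : Type) [Infinite K] : Cardinal.mk (Tm K) ≤ Cardinal.mk K := by
  have hK : Cardinal.aleph0 ≤ Cardinal.mk K := Cardinal.aleph0_le_mk K
  refine (Cardinal.mk_le_of_injective toW_injective).trans ?_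
  refine WType.cardinalMk_le_max_aleph0_of_finite.trans (max_le ?_ hK)
  have h1 : Cardinal.mk (Unit ⊕ (ℚ × ℚ × ℚ)) ≤ Cardinal.mk K := Cardinal.mk_le_aleph0.trans hK
  have h2 : Cardinal.mk (Unit ⊕ K) ≤ Cardinal.mk K := by
    rw [Cardinal.mk_sum]
    simp only [Cardinal.lift_id]
    exact Cardinal.add_le_of_le hK (Cardinal.mk_le_aleph0.trans hK) le_rfl
  have h3 : Cardinal.mk (Finset K) ≤ Cardinal.mk K := (Cardinal.mk_finset_of_infinite K).le
  rw [Cardinal.mk_sum, Cardinal.mk_sum (Unit ⊕ K)]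
  simp only [Cardinal.lift_id]
  exact Cardinal.add_le_of_le hK h1 (Cardinal.add_le_of_le hK h2 h3)

/-- truncation of `g` between `2 y - 1` and `2 y` -/
noncomputable def med (g y : ℝ) : ℝ := max (min g (2 * y)) (2 * y - 1)

@[fun_prop]
theorem continuous_med {X : Type*} [TopologicalSpace X] {f g : X → ℝ} (hf : Continuous f)
    (hg : Continuous g) : Continuous fun x => med (f x) (g x) := by
  unfold med; fun_prop

/-- the basic laws (including the crookedness law for `z`) -/
structure Good0 {K : Type} (x : Tm K → ℝ) : Prop where
  mem : ∀ t, x t ∈ Icc (0:ℝ) 1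
  lin : ∀ (a b c : ℚ) f g, x (.lin a b c f g) = clamp (a * x f + b * x g + c)
  z : ∀ f, x f = med (1 - x (.z f)) (x (.z f))

/-- indices for the partition laws -/
abbrev PI (K : Type) : Type := Σ s : Finset K, Tm K × ({i // i ∈ s} → Tm K)

/-- the partition laws -/
def PC {K : Type} (x : Tm K → ℝ) (α : PI K) : Prop :=
  (1 / 3 ≤ x α.2.1 ∨ x (.p α.1 α.2.1 α.2.2) = 0) ∧
  (x α.2.1 ≤ 2 / 3 ∨ x (.p α.1 α.2.1 α.2.2) = 1) ∧
  (x (.p α.1 α.2.1 α.2.2) ≤ 1 / 3 ∨ 2 / 3 ≤ x (.p α.1 α.2.1 α.2.2) ∨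
    ∀ i : {i // i ∈ α.1}, med (x (α.2.2 i)) (x (.y α.2.1 i.1)) = 1 / 2)

/-- stretching of a small interval -/
noncomputable def psi (n k : ℕ) (v : ℝ) : ℝ := clamp (3 * n * (v - 1 / 3) - k)

/-- bump function -/
noncomputable def th (s : ℝ) : ℝ := clamp (min (3 * s) (3 - 3 * s))

/-- evaluation of terms on the free cube -/
noncomputable def ev {K : Type} (n : ℕ) (e : PI K → ℕ) (r : Tm K → ℝ) : Tm K → ℝ
  | .star => r .star
  | .lin a b c f g => clamp (a * ev n e r f + b * ev n e r g + c)
  | .z f => r (.z f)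
  | .y f i => r (.y f i)
  | .p s f g => psi n (e ⟨s, f, g⟩) (ev n e r f)

theorem ev_cont {K : Type} (n : ℕ) (e : PI K → ℕ) (t : Tm K) :
    Continuous fun r : Tm K → ℝ => ev n e r t := by
  induction t with
  | star => simp only [ev]; fun_prop
  | lin a b c f g hf hg => simp only [ev]; fun_prop
  | z f hf => simp only [ev]; fun_prop
  | y f i hf => simp only [ev]; fun_prop
  | p s f g hf hg => simp only [ev, psi]; fun_prop

theorem ev_mem {K : Type} (n : ℕ) (e : PI K → ℕ) (r : Tm K → ℝ) (hr : ∀ t, r t ∈ Icc (0:ℝ) 1)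
    (t : Tm K) : ev n e r t ∈ Icc (0:ℝ) 1 := by
  cases t <;> simp only [ev, psi] <;> first | exact hr _ | exact clamp_mem _

theorem th_one {s : ℝ} (h : 1 / 3 < s) (h' : s < 2 / 3) : th s = 1 := by
  unfold th; rw [clamp_eq_one]; grind

theorem th_psi_zero {n k k' : ℕ} (hk : k ≠ k') {v : ℝ} (h : 1 / 3 < psi n k v)
    (h' : psi n k v < 2 / 3) : th (psi n k' v) = 0 := by
  unfold psi at *
  generalize 3 * (n:ℝ) * (v - 1 / 3) = u at *
  have h1 : 0 < u - k := by
    by_contra hc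
    rw [clamp_eq_zero.2 (not_lt.1 hc)] at h
    norm_num at h
  have h2 : u - k < 1 := by
    by_contra hc
    rw [clamp_eq_one.2 (not_lt.1 hc)] at h'
    norm_num at h'
  unfold th
  rw [clamp_eq_zero]
  rcases lt_or_gt_of_ne hk with hlt | hlt
  · have : (k:ℝ) + 1 ≤ k' := by exact_mod_cast hlt
    rw [clamp_eq_zero.2 (by linarith)]
    norm_num
  · have : (k':ℝ) + 1 ≤ k := by exact_mod_cast hlt
    rw [clamp_eq_one.2 (by linarith)]
    norm_num

open Classical in
/-- the system of equations -/
noncomputable def eqn {K : Type} (n : ℕ) (e : PI K → ℕ) (Φ : Finset (PI K)) (g0 : Tm K) :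
    Tm K → (Tm K → ℝ) → ℝ
  | .star, r => med (ev n e r g0) (r .star) - 1 / 2
  | .z f, r => med (1 - r (.z f)) (r (.z f)) - ev n e r f
  | .y f i, r => (r (.y f i) - 1 / 2) + ∑ α ∈ Φ,
      if hh : α.2.1 = f ∧ i ∈ α.1 then
        th (psi n (e α) (ev n e r f)) * (med (ev n e r (α.2.2 ⟨i, hh.2⟩)) (r (.y f i)) - r (.y f i))
      else 0
  | .lin a b c f g, r => r (.lin a b c f g) - 1 / 2
  | .p s f g, r => r (.p s f g) - 1 / 2

theorem eqn_cont {K : Type} (n : ℕ) (e : PI K → ℕ) (Φ : Finset (PI K)) (g0 : Tm K) (t : Tm K) :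
    Continuous (eqn n e Φ g0 t) := by
  have hev := ev_cont n e
  cases t with
  | star => unfold eqn; fun_prop
  | lin a b c f g => unfold eqn; fun_prop
  | z f => unfold eqn; fun_prop
  | y f i =>
    unfold eqn
    refine Continuous.add (by fun_prop) (continuous_finsetSum _ fun α _ => ?_)
    split_ifs with hh
    · have := hev f
      have h2 := hev (α.2.2 ⟨i, hh.2⟩)
      unfold th psi
      fun_prop
    · exact continuous_const
  | p s f g => unfold eqn; fun_prop

theorem med_zero {g : ℝ} (h : g ∈ Icc (0:ℝ) 1) : med g 0 = 0 := by
  obtain ⟨h1, h2⟩ := h; unfold med; grind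

theorem med_one {g : ℝ} (h : g ∈ Icc (0:ℝ) 1) : med g 1 = 1 := by
  obtain ⟨h1, h2⟩ := h; unfold med; grind

theorem consistent {K : Type} (Φ : Finset (PI K)) (g0 : Tm K) :
    ∃ x : Tm K → ℝ, Good0 x ∧ (∀ α ∈ Φ, PC x α) ∧ med (x g0) (x .star) = 1 / 2 := by
  classical
  let n := Φ.card
  let e : PI K → ℕ := fun α => if h : α ∈ Φ then Φ.equivFin ⟨α, h⟩ else 0
  have he : ∀ α ∈ Φ, e α + 1 ≤ n := by
    intro α hα
    simp only [e, hα, dite_true]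
    exact (Φ.equivFin ⟨α, hα⟩).2
  have hinj : ∀ α ∈ Φ, ∀ β ∈ Φ, e α = e β → α = β := by
    intro α hα β hβ h
    simp only [e, hα, hβ, dite_true] at h
    have := Φ.equivFin.injective (Fin.ext h)
    exact congrArg Subtype.val this
  obtain ⟨r, hr, hr0⟩ := miranda (eqn n e Φ g0) (eqn_cont n e Φ g0)
    (by
      intro t x hx h0
      have hm := ev_mem n e x hx
      cases t with
      | star => simp only [eqn, h0, med_zero (hm _)]; norm_num
      | lin a b c f g => simp only [eqn, h0]; norm_num
      | p s f g => simp only [eqn, h0]; norm_num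
      | z f =>
        simp only [eqn, h0]
        rw [med_zero (by norm_num)]
        linarith [(hm f).1]
      | y f i =>
        simp only [eqn, h0, med_zero (hm _)]
        simp)
    (by
      intro t x hx h0
      have hm := ev_mem n e x hx
      cases t with
      | star => simp only [eqn, h0, med_one (hm _)]; norm_num
      | lin a b c f g => simp only [eqn, h0]; norm_num
      | p s f g => simp only [eqn, h0]; norm_num
      | z f =>
        simp only [eqn, h0]
        rw [med_one (by norm_num)]
        linarith [(hm f).2]
      | y f i =>
        simp only [eqn, h0, med_one (hm _)]
        norm_num)
  have hm := ev_mem n e r hr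
  refine ⟨ev n e r, ⟨hm, fun a b c f g => by simp only [ev], fun f => ?_⟩, ?_, ?_⟩
  · have := hr0 (.z f)
    simp only [eqn] at this
    simp only [ev]
    linarith
  · rintro ⟨s, f, g⟩ hα
    have hn : (0:ℝ) ≤ n := Nat.cast_nonneg n
    have hen : ((e ⟨s, f, g⟩ : ℕ) : ℝ) + 1 ≤ n := by exact_mod_cast he _ hα
    have hk : (0:ℝ) ≤ e ⟨s, f, g⟩ := Nat.cast_nonneg _
    refine ⟨?_, ?_, ?_⟩
    · simp only [ev]
      by_cases h : 1 / 3 ≤ ev n e r f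
      · exact Or.inl h
      · right
        unfold psi
        rw [clamp_eq_zero]
        push Not at h
        nlinarith
    · simp only [ev]
      by_cases h : ev n e r f ≤ 2 / 3
      · exact Or.inl h
      · right
        unfold psi
        rw [clamp_eq_one]
        push Not at h
        nlinarith
    · by_cases h1 : ev n e r (.p s f g) ≤ 1 / 3
      · exact Or.inl h1
      by_cases h2 : 2 / 3 ≤ ev n e r (.p s f g)
      · exact Or.inr (Or.inl h2)
      refine Or.inr (Or.inr fun i => ?_)
      push Not at h1 h2
      simp only [ev] at h1 h2
      have hy := hr0 (.y f i.1)
      simp only [eqn] at hy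
      rw [Finset.sum_eq_single_of_mem (⟨s, f, g⟩ : PI K) hα] at hy
      · rw [dif_pos ⟨rfl, i.2⟩, th_one h1 h2] at hy
        simp only [ev]
        linarith
      · intro β hβ hne
        split_ifs with hh
        · rw [th_psi_zero (fun h => hne (hinj _ hα _ hβ h).symm) h1 h2, zero_mul]
        · rfl
  · have := hr0 .star
    simp only [eqn] at this
    have h2 : ev n e r .star = r .star := by simp only [ev]
    rw [h2]
    linarith

end HIC

namespace HIC
open Filter Topology

/-- a space together with a faithful family of functions obeying all the laws -/
structure Model {K : Type} (X : Type) [TopologicalSpace X] (val : X → Tm K → ℝ) : Prop where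
  cont : ∀ t, Continuous fun x => val x t
  inj : Function.Injective val
  good0 : ∀ x, Good0 (val x)
  pc : ∀ x α, PC (val x) α

theorem Model.restrict {K X : Type} [TopologicalSpace X] {val : X → Tm K → ℝ} (M : Model X val)
    (C : Set X) : Model (↥C) (fun x : C => val x.1) where
  cont t := (M.cont t).comp continuous_subtype_val
  inj := M.inj.comp Subtype.val_injective
  good0 x := M.good0 x.1
  pc x := M.pc x.1

theorem med_zero_half {y : ℝ} (h : med 0 y = 1 / 2) : y = 3 / 4 := by
  unfold med at h
  rcases max_choice (min 0 (2 * y)) (2 * y - 1) with h1 | h1 <;> rw [h1] at h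
  · have := min_le_left 0 (2 * y); linarith
  · linarith

theorem med_one_half {y : ℝ} (h : med 1 y = 1 / 2) : y = 1 / 4 := by
  unfold med at h
  rcases max_choice (min 1 (2 * y)) (2 * y - 1) with h1 | h1 <;> rw [h1] at h
  · rcases min_choice 1 (2 * y) with h2 | h2 <;> rw [h2] at h <;> linarith
  · have : min 1 (2 * y) ≤ 2 * y - 1 := max_eq_right_iff.1 h1
    rcases min_choice 1 (2 * y) with h2 | h2 <;> rw [h2] at this <;> linarith

section
variable {K X : Type} [TopologicalSpace X] {val : X → Tm K → ℝ}

theorem sep_pts (M : Model X val) {x y : X} (h : x ≠ y) :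
    ∃ t, (∀ᶠ w in 𝓝 x, val w t = 0) ∧ ∀ᶠ w in 𝓝 y, val w t = 1 := by
  have hne : val x ≠ val y := fun e => h (M.inj e)
  obtain ⟨s, hs⟩ := Function.ne_iff.1 hne
  have key : ∀ (c : ℚ) (d : ℚ), (c * val x s + d < 0) → (1 < c * val y s + d) →
      ∃ t, (∀ᶠ w in 𝓝 x, val w t = 0) ∧ ∀ᶠ w in 𝓝 y, val w t = 1 := by
    intro c d h0 h1
    have hc : Continuous fun w => (c : ℝ) * val w s + d :=
      (continuous_const.mul (M.cont s)).add continuous_const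
    refine ⟨.lin c 0 d s s, ?_, ?_⟩
    · filter_upwards [hc.continuousAt.eventually_lt (continuousAt_const (y := (0:ℝ))) h0] with w hw
      rw [(M.good0 w).lin, clamp_eq_zero]; push_cast; linarith
    · filter_upwards [(continuousAt_const (y := (1:ℝ))).eventually_lt hc.continuousAt h1] with w hw
      rw [(M.good0 w).lin, clamp_eq_one]; push_cast; linarith
  rcases lt_or_gt_of_ne hs with hlt | hlt
  · obtain ⟨q1, h1, h2⟩ := exists_rat_btwn hlt
    obtain ⟨q2, h3, h4⟩ := exists_rat_btwn h2
    have hp : (0:ℝ) < q2 - q1 := by linarith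
    refine key (1 / (q2 - q1)) (-q1 / (q2 - q1)) ?_ ?_
    · push_cast
      rw [show 1 / ((q2:ℝ) - q1) * val x s + -q1 / (q2 - q1) = (val x s - q1) / (q2 - q1) by ring]
      exact div_neg_of_neg_of_pos (by linarith) hp
    · push_cast
      rw [show 1 / ((q2:ℝ) - q1) * val y s + -q1 / (q2 - q1) = (val y s - q1) / (q2 - q1) by ring,
        lt_div_iff₀ hp]
      linarith
  · obtain ⟨q1, h1, h2⟩ := exists_rat_btwn hlt
    obtain ⟨q2, h3, h4⟩ := exists_rat_btwn h2
    have hp : (0:ℝ) < q2 - q1 := by linarith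
    refine key (-1 / (q2 - q1)) (q2 / (q2 - q1)) ?_ ?_
    · push_cast
      rw [show -1 / ((q2:ℝ) - q1) * val x s + q2 / (q2 - q1) = (q2 - val x s) / (q2 - q1) by ring]
      exact div_neg_of_neg_of_pos (by linarith) hp
    · push_cast
      rw [show -1 / ((q2:ℝ) - q1) * val y s + q2 / (q2 - q1) = (q2 - val y s) / (q2 - q1) by ring,
        lt_div_iff₀ hp]
      linarith

theorem sep [CompactSpace X] (M : Model X val) {C D : Set X} (hC : IsClosed C) (hD : IsClosed D)
    (hCD : Disjoint C D) : ∃ t, (∀ x ∈ C, val x t = 0) ∧ ∀ x ∈ D, val x t = 1 := by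
  have h1 : ∀ y ∉ C, ∃ t, (∀ x ∈ C, val x t = 0) ∧ ∀ᶠ w in 𝓝 y, val w t = 1 := by
    intro y hy
    refine hC.isCompact.induction_on (p := fun S => ∃ t, (∀ x ∈ S, val x t = 0) ∧
      ∀ᶠ w in 𝓝 y, val w t = 1) ?_ ?_ ?_ ?_
    · refine ⟨.lin 0 0 1 .star .star, by simp, Eventually.of_forall fun w => ?_⟩
      rw [(M.good0 w).lin, clamp_eq_one]; simp
    · rintro S T hST ⟨t, h1, h2⟩
      exact ⟨t, fun x hx => h1 x (hST hx), h2⟩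
    · rintro S T ⟨t, h1, h2⟩ ⟨u, h3, h4⟩
      refine ⟨.lin 1 1 (-1) t u, ?_, ?_⟩
      · rintro x (hx | hx) <;> rw [(M.good0 x).lin, clamp_eq_zero] <;> push_cast
        · have := ((M.good0 x).mem u).2
          rw [h1 x hx]; linarith
        · have := ((M.good0 x).mem t).2
          rw [h3 x hx]; linarith
      · filter_upwards [h2, h4] with w h5 h6
        rw [(M.good0 w).lin, clamp_eq_one, h5, h6]; norm_num
    · intro x hx
      obtain ⟨t, h1, h2⟩ := sep_pts M (x := x) (y := y) (by rintro rfl; exact hy hx)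
      exact ⟨{w | val w t = 0}, mem_nhdsWithin_of_mem_nhds h1, t, fun x hx => hx, h2⟩
  refine hD.isCompact.induction_on (p := fun S => ∃ t, (∀ x ∈ C, val x t = 0) ∧
      ∀ x ∈ S, val x t = 1) ?_ ?_ ?_ ?_
  · refine ⟨.lin 0 0 0 .star .star, fun w _ => ?_, by simp⟩
    rw [(M.good0 w).lin, clamp_eq_zero]; simp
  · rintro S T hST ⟨t, h1, h2⟩
    exact ⟨t, h1, fun x hx => h2 x (hST hx)⟩
  · rintro S T ⟨t, h1, h2⟩ ⟨u, h3, h4⟩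
    refine ⟨.lin 1 1 0 t u, ?_, ?_⟩
    · intro x hx
      rw [(M.good0 x).lin, clamp_eq_zero, h1 x hx, h3 x hx]; norm_num
    · rintro x (hx | hx) <;> rw [(M.good0 x).lin, clamp_eq_one] <;> push_cast
      · have := ((M.good0 x).mem u).1
        rw [h2 x hx]; linarith
      · have := ((M.good0 x).mem t).1
        rw [h4 x hx]; linarith
  · intro y hy
    obtain ⟨t, h1, h2⟩ := h1 y (fun hc => hCD.le_bot ⟨hc, hy⟩)
    exact ⟨{w | val w t = 1}, mem_nhdsWithin_of_mem_nhds h2, t, h1, fun x hx => hx⟩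

theorem model_HI [CompactSpace X] [T2Space X] (M : Model X val) :
    HereditarilyIndecomposable X := by
  rintro C D hC hC' hD hD' ⟨c0, hc0C, hc0D⟩
  by_contra hcon
  push Not at hcon
  obtain ⟨hn1, hn2⟩ := hcon
  obtain ⟨a, haC, haD⟩ := not_subset.1 hn1
  obtain ⟨b, hbD, hbC⟩ := not_subset.1 hn2
  obtain ⟨f1, hf1, hf1'⟩ := sep M (isClosed_singleton (x := a)) hD.isClosed
    (disjoint_singleton_left.2 haD)
  obtain ⟨f2, hf2, hf2'⟩ := sep M hC.isClosed (isClosed_singleton (x := b))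
    (disjoint_singleton_right.2 hbC)
  set f : Tm K := .lin (1/2) (1/2) 0 f1 f2 with hf
  have hv : ∀ x, val x f = (val x f1 + val x f2) / 2 := by
    intro x
    rw [hf, (M.good0 x).lin, clamp_of_mem] <;> push_cast
    · ring
    · have h1 := (M.good0 x).mem f1
      have h2 := (M.good0 x).mem f2
      exact ⟨by linarith [h1.1, h2.1], by linarith [h1.2, h2.2]⟩
  have hz := fun x => (M.good0 x).z f
  have hzm := fun x => (M.good0 x).mem (.z f)
  simp only [hv, med] at hz
  have hza : val a (.z f) = 0 := by
    have h := hz a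
    rw [hf1 a rfl, hf2 a haC] at h
    have h1 := le_max_left (min (1 - val a (.z f)) (2 * val a (.z f))) (2 * val a (.z f) - 1)
    have h2 := le_max_right (min (1 - val a (.z f)) (2 * val a (.z f))) (2 * val a (.z f) - 1)
    have := hzm a
    rcases min_le_iff.1 (le_of_le_of_eq h1 h.symm) with h3 | h3 <;> linarith [this.1, this.2]
  have hzb : val b (.z f) = 1 := by
    have h := hz b
    rw [hf1' b hbD, hf2' b rfl] at h
    have := hzm b
    rcases max_choice (min (1 - val b (.z f)) (2 * val b (.z f))) (2 * val b (.z f) - 1)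
      with h1 | h1 <;> rw [h1] at h
    · rcases min_choice (1 - val b (.z f)) (2 * val b (.z f)) with h2 | h2
      · have h3 := min_eq_left_iff.1 h2
        rw [h2] at h; linarith [this.1, this.2]
      · have h3 := min_eq_right_iff.1 h2
        rw [h2] at h; linarith [this.1, this.2]
    · linarith [this.1, this.2]
  have hCz : val c0 (.z f) < 1 / 3 := by
    by_contra hge
    push Not at hge
    obtain ⟨x, hxC, hx⟩ := hC'.isPreconnected.intermediate_value haC hc0C
      (M.cont (.z f)).continuousOn (show (1/3 : ℝ) ∈ Icc _ _ from ⟨by rw [hza]; norm_num, hge⟩)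
    have h := hz x
    have h1 := ((M.good0 x).mem f1).2
    simp only at hx
    rw [hf2 x hxC, hx] at h
    norm_num at h
    linarith
  have hDz : 2 / 3 < val c0 (.z f) := by
    by_contra hge
    push Not at hge
    obtain ⟨x, hxC, hx⟩ := hD'.isPreconnected.intermediate_value hc0D hbD
      (M.cont (.z f)).continuousOn (show (2/3 : ℝ) ∈ Icc _ _ from ⟨hge, by rw [hzb]; norm_num⟩)
    have h := hz x
    have h1 := ((M.good0 x).mem f2).1
    simp only at hx
    rw [hf1' x hxC, hx] at h
    norm_num at h
    linarith
  linarith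

theorem model_essential [CompactSpace X] [T2Space X] [ConnectedSpace X] [Nontrivial X]
    (M : Model X val) : ∃ A B : K → Set X, IsEssentialFamily A B := by
  obtain ⟨a, b, hab⟩ := exists_pair_ne X
  obtain ⟨f, hfa, hfb⟩ := sep M (isClosed_singleton (x := a)) (isClosed_singleton (x := b))
    (disjoint_singleton.2 hab)
  have hfa := hfa a rfl
  have hfb := hfb b rfl
  refine ⟨fun i => {x | val x (.y f i) ≤ 1 / 4}, fun i => {x | 3 / 4 ≤ val x (.y f i)},
    fun i => isClosed_le (M.cont _) continuous_const,
    fun i => isClosed_le continuous_const (M.cont _), fun i => ?_, ?_⟩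
  · rw [Set.disjoint_left]
    intro x h1 h2
    rw [mem_ofPred_eq] at h1 h2
    linarith
  intro L hL
  choose hLc U V hU hV hUV hAU hBV hLUV using hL
  by_contra hemp
  rw [not_nonempty_iff_eq_empty] at hemp
  obtain ⟨s, hs⟩ := isCompact_univ.elim_finite_subfamily_closed L hLc (by rw [hemp, inter_empty])
  rw [univ_inter] at hs
  have hcov : (univ : Set X) ⊆ ⋃ i : {i // i ∈ s}, (U i.1 ∪ V i.1) := by
    intro x _
    have hx : x ∉ ⋂ i ∈ s, L i := by rw [hs]; exact notMem_empty x
    simp only [mem_iInter, not_forall] at hx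
    obtain ⟨i, hi, hx⟩ := hx
    refine mem_iUnion.2 ⟨⟨i, hi⟩, ?_⟩
    rw [← hLUV]; exact hx
  obtain ⟨v, hv, hvc, hvU⟩ := exists_subset_iUnion_closed_subset isClosed_univ
    (fun i : {i // i ∈ s} => (hU i.1).union (hV i.1)) (fun x _ => Set.toFinite _) hcov
  have hg : ∀ i : {i // i ∈ s}, ∃ t, (∀ x ∈ (v i \ V i.1) ∪ {x | val x (.y f i.1) ≤ 1 / 4},
      val x t = 0) ∧ ∀ x ∈ (v i \ U i.1) ∪ {x | 3 / 4 ≤ val x (.y f i.1)}, val x t = 1 := by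
    intro i
    refine sep M (((hvc i).sdiff (hV i.1)).union (isClosed_le (M.cont _) continuous_const))
      (((hvc i).sdiff (hU i.1)).union (isClosed_le continuous_const (M.cont _))) ?_
    rw [Set.disjoint_left]
    rintro x (⟨h1, h2⟩ | h1) (⟨h3, h4⟩ | h3)
    · rcases hvU i h1 with h | h
      · exact h4 h
      · exact h2 h
    · exact h2 (hBV i.1 h3)
    · exact h4 (hAU i.1 h1)
    · rw [mem_ofPred_eq] at h1 h3
      linarith
  choose g hg0 hg1 using hg
  have hpa : val a (.p s f g) = 0 := by
    rcases (M.pc a ⟨s, f, g⟩).1 with h | h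
    · simp only [hfa] at h; norm_num at h
    · exact h
  have hpb : val b (.p s f g) = 1 := by
    rcases (M.pc b ⟨s, f, g⟩).2.1 with h | h
    · simp only [hfb] at h; norm_num at h
    · exact h
  obtain ⟨x, -, hx⟩ := isPreconnected_univ.intermediate_value (mem_univ a) (mem_univ b)
      (M.cont (.p s f g)).continuousOn
      (show (1/2 : ℝ) ∈ Icc _ _ from ⟨by rw [hpa]; norm_num, by rw [hpb]; norm_num⟩)
  simp only at hx
  have hall : ∀ i : {i // i ∈ s}, med (val x (g i)) (val x (.y f i.1)) = 1 / 2 := by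
    rcases (M.pc x ⟨s, f, g⟩).2.2 with h | h | h
    · simp only [hx] at h; norm_num at h
    · simp only [hx] at h; norm_num at h
    · exact h
  obtain ⟨i, hi⟩ := mem_iUnion.1 (hv (mem_univ x))
  have hi2 := hall i
  by_cases hxV : x ∈ V i.1
  · have hxU : x ∉ U i.1 := fun h => (hUV i.1).le_bot ⟨h, hxV⟩
    have h1 := hg1 i x (Or.inl ⟨hi, hxU⟩)
    rw [h1] at hi2
    have h2 := hg0 i x (Or.inr (med_one_half hi2).le)
    linarith
  · have h1 := hg0 i x (Or.inl ⟨hi, hxV⟩)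
    rw [h1] at hi2
    have h2 := hg1 i x (Or.inr (med_zero_half hi2).ge)
    linarith

theorem model_weight [CompactSpace X] [T2Space X] (M : Model X val) :
    topWeight X ≤ Cardinal.mk (Tm K) := by
  have hb : TopologicalSpace.IsTopologicalBasis
      (range fun t : Tm K => {x : X | 1 / 2 < val x t}) := by
    refine TopologicalSpace.isTopologicalBasis_of_isOpen_of_nhds ?_ ?_
    · rintro _ ⟨t, rfl⟩
      exact isOpen_lt continuous_const (M.cont t)
    · intro x u hx hu
      obtain ⟨t, h0, h1⟩ := sep M hu.isClosed_compl (isClosed_singleton (x := x))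
        (disjoint_singleton_right.2 (by simpa using hx))
      refine ⟨_, ⟨t, rfl⟩, ?_, ?_⟩
      · rw [mem_ofPred_eq, h1 x rfl]; norm_num
      · intro w hw
        by_contra hwu
        rw [mem_ofPred_eq, h0 w hwu] at hw
        norm_num at hw
  refine (ciInf_le' _ ⟨_, hb⟩).trans ?_
  exact Cardinal.mk_range_le

end

/-- the universal space of all lawful evaluations -/
def H0 (K : Type) : Set (Tm K → ℝ) := {x | Good0 x ∧ ∀ α, PC x α}

theorem closed_good0 (K : Type) : IsClosed {x : Tm K → ℝ | Good0 x} := by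
  have : {x : Tm K → ℝ | Good0 x} = (⋂ t, {x | x t ∈ Icc (0:ℝ) 1}) ∩
      ((⋂ a : ℚ, ⋂ b : ℚ, ⋂ c : ℚ, ⋂ f, ⋂ g, {x | x (.lin a b c f g) = clamp (a * x f + b * x g + c)})
      ∩ ⋂ f, {x | x f = med (1 - x (.z f)) (x (.z f))}) := by
    ext x
    simp only [mem_inter_iff, mem_iInter, mem_ofPred_eq]
    exact ⟨fun h => ⟨h.mem, h.lin, h.z⟩, fun h => ⟨h.1, h.2.1, h.2.2⟩⟩
  rw [this]
  refine (isClosed_iInter fun t => isClosed_Icc.preimage (continuous_apply t)).inter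
    ((isClosed_iInter fun a => isClosed_iInter fun b => isClosed_iInter fun c =>
      isClosed_iInter fun f => isClosed_iInter fun g => isClosed_eq (by fun_prop)
        (continuous_clamp.comp (by fun_prop))).inter
      (isClosed_iInter fun f => isClosed_eq (by fun_prop) (by fun_prop)))

theorem closed_PC {K : Type} (α : PI K) : IsClosed {x : Tm K → ℝ | PC x α} := by
  have e : {x : Tm K → ℝ | PC x α} =
    ({x | 1 / 3 ≤ x α.2.1} ∪ {x | x (.p α.1 α.2.1 α.2.2) = 0}) ∩
    (({x | x α.2.1 ≤ 2 / 3} ∪ {x | x (.p α.1 α.2.1 α.2.2) = 1}) ∩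
    ({x | x (.p α.1 α.2.1 α.2.2) ≤ 1 / 3} ∪ ({x | 2 / 3 ≤ x (.p α.1 α.2.1 α.2.2)} ∪
      ⋂ i : {i // i ∈ α.1}, {x | med (x (α.2.2 i)) (x (.y α.2.1 i.1)) = 1 / 2}))) := by
    ext x
    simp only [PC, mem_inter_iff, mem_union, mem_iInter, mem_ofPred_eq]
  rw [e]
  refine ((isClosed_le ?_ ?_).union (isClosed_eq ?_ ?_)).inter
    (((isClosed_le ?_ ?_).union (isClosed_eq ?_ ?_)).inter
    ((isClosed_le ?_ ?_).union ((isClosed_le ?_ ?_).union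
      (isClosed_iInter fun i => isClosed_eq ?_ ?_)))) <;> fun_prop

theorem compact_H0' (K : Type) : IsCompact {x : Tm K → ℝ | Good0 x} := by
  refine (isCompact_univ_pi (fun _ : Tm K => isCompact_Icc (a := (0:ℝ)) (b := 1))).of_isClosed_subset
    (closed_good0 K) ?_
  intro x hx t _
  exact hx.mem t

theorem compact_H0 (K : Type) : IsCompact (H0 K) := by
  have : H0 K = {x | Good0 x} ∩ ⋂ α, {x | PC x α} := by
    ext x; simp [H0]
  rw [this]
  exact (compact_H0' K).inter_right (isClosed_iInter closed_PC)

theorem H0_point (K : Type) (g0 : Tm K) : ∃ x ∈ H0 K, med (x g0) (x .star) = 1 / 2 := by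
  have hcl : IsClosed {x : Tm K → ℝ | med (x g0) (x .star) = 1 / 2} :=
    isClosed_eq (by fun_prop) continuous_const
  obtain ⟨x, ⟨h1, h2⟩, h3⟩ := ((compact_H0' K).inter_right hcl).inter_iInter_nonempty
    (fun α => {x | PC x α}) closed_PC (by
      intro Φ
      obtain ⟨x, h1, h2, h3⟩ := consistent Φ g0
      exact ⟨x, ⟨h1, h3⟩, mem_iInter₂.2 h2⟩)
  exact ⟨x, ⟨h1, fun α => mem_iInter.1 h3 α⟩, h2⟩

theorem H0_model (K : Type) : Model (↥(H0 K)) (fun x : H0 K => (x.1 : Tm K → ℝ)) where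
  cont t := (continuous_apply t).comp continuous_subtype_val
  inj := Subtype.val_injective
  good0 x := x.2.1
  pc x := x.2.2

theorem H0_component (K : Type) :
    ∃ a b : H0 K, b ∈ connectedComponent a ∧ a ≠ b := by
  haveI : CompactSpace (H0 K) := isCompact_iff_compactSpace.1 (compact_H0 K)
  have M := H0_model K
  by_contra hcon
  push Not at hcon
  have hA : IsClosed {x : H0 K | x.1 .star ≤ 1 / 4} := isClosed_le (M.cont _) continuous_const
  have hB : IsClosed {x : H0 K | 3 / 4 ≤ x.1 .star} := isClosed_le continuous_const (M.cont _)
  have hab : ∀ a b : H0 K, a.1 .star ≤ 1 / 4 → 3 / 4 ≤ b.1 .star →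
      ∃ W : Set (H0 K), IsClopen W ∧ a ∈ W ∧ b ∉ W := by
    intro a b ha hb
    have hne : b ∉ connectedComponent a := by
      intro h
      have := hcon a b h
      subst this
      linarith
    rw [connectedComponent_eq_iInter_isClopen] at hne
    simp only [mem_iInter, not_forall] at hne
    obtain ⟨⟨W, h1, h2⟩, h3⟩ := hne
    exact ⟨W, h1, h2, h3⟩
  have hb : ∀ b : H0 K, 3 / 4 ≤ b.1 .star →
      ∃ W : Set (H0 K), IsClopen W ∧ {x : H0 K | x.1 .star ≤ 1 / 4} ⊆ W ∧ b ∉ W := by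
    intro b hb
    refine hA.isCompact.induction_on (p := fun S => ∃ W : Set (H0 K), IsClopen W ∧ S ⊆ W ∧ b ∉ W)
      ⟨∅, isClopen_empty, subset_rfl, notMem_empty _⟩ ?_ ?_ ?_
    · rintro S T hST ⟨W, h1, h2, h3⟩
      exact ⟨W, h1, hST.trans h2, h3⟩
    · rintro S T ⟨W, h1, h2, h3⟩ ⟨W', h1', h2', h3'⟩
      exact ⟨W ∪ W', h1.union h1', union_subset_union h2 h2', fun h => h.elim h3 h3'⟩
    · intro a ha
      obtain ⟨W, h1, h2, h3⟩ := hab a b ha hb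
      exact ⟨W, mem_nhdsWithin_of_mem_nhds (h1.isOpen.mem_nhds h2), W, h1, subset_rfl, h3⟩
  have hW : ∃ W : Set (H0 K), IsClopen W ∧ {x : H0 K | x.1 .star ≤ 1 / 4} ⊆ W ∧
      Disjoint W {x : H0 K | 3 / 4 ≤ x.1 .star} := by
    refine hB.isCompact.induction_on (p := fun S => ∃ W : Set (H0 K), IsClopen W ∧
      {x : H0 K | x.1 .star ≤ 1 / 4} ⊆ W ∧ Disjoint W S)
      ⟨univ, isClopen_univ, subset_univ _, disjoint_empty _⟩ ?_ ?_ ?_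
    · rintro S T hST ⟨W, h1, h2, h3⟩
      exact ⟨W, h1, h2, h3.mono_right hST⟩
    · rintro S T ⟨W, h1, h2, h3⟩ ⟨W', h1', h2', h3'⟩
      exact ⟨W ∩ W', h1.inter h1', subset_inter h2 h2', disjoint_union_right.2
        ⟨h3.mono_left inter_subset_left, h3'.mono_left inter_subset_right⟩⟩
    · intro b hbm
      obtain ⟨W, h1, h2, h3⟩ := hb b hbm
      exact ⟨Wᶜ, mem_nhdsWithin_of_mem_nhds (h1.compl.isOpen.mem_nhds h3), W, h1, h2,
        disjoint_compl_right⟩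
  obtain ⟨W, h1, h2, h3⟩ := hW
  obtain ⟨g0, hg0, hg1⟩ := sep M h1.isClosed h1.compl.isClosed disjoint_compl_right
  obtain ⟨x, hx, hm⟩ := H0_point K g0
  by_cases hxW : (⟨x, hx⟩ : H0 K) ∈ W
  · have h4 := hg0 _ hxW
    simp only at h4
    rw [h4] at hm
    exact h3.le_bot ⟨hxW, (med_zero_half hm).ge⟩
  · have h4 := hg1 _ hxW
    simp only at h4
    rw [h4] at hm
    exact hxW (h2 (med_one_half hm).le)

theorem main_aux (K : Type) [Infinite K] :
    ∃ (H : Type) (_ : TopologicalSpace H), CompactSpace H ∧ T2Space H ∧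
      ConnectedSpace H ∧ Nontrivial H ∧ HereditarilyIndecomposable H ∧
      topWeight H ≤ Cardinal.mk K ∧
      ∀ C : Set H, IsCompact C → IsConnected C → C.Nontrivial →
        ∃ A B : K → Set ↥C, IsEssentialFamily A B := by
  obtain ⟨a, b, hb, hne⟩ := H0_component K
  haveI : CompactSpace (H0 K) := isCompact_iff_compactSpace.1 (compact_H0 K)
  have M := (H0_model K).restrict (connectedComponent a)
  haveI hcs : CompactSpace (connectedComponent a) :=
    isCompact_iff_compactSpace.1 isClosed_connectedComponent.isCompact
  refine ⟨↥(connectedComponent a), inferInstance, hcs, inferInstance,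
    isConnected_iff_connectedSpace.1 isConnected_connectedComponent,
    ⟨⟨a, mem_connectedComponent⟩, ⟨b, hb⟩, fun h => hne (congrArg Subtype.val h)⟩,
    model_HI M, (model_weight M).trans (mk_Tm_le K), ?_⟩
  intro C hC hC' hCn
  haveI : CompactSpace C := isCompact_iff_compactSpace.1 hC
  haveI : ConnectedSpace C := isConnected_iff_connectedSpace.1 hC'
  haveI : Nontrivial C := hCn.coe_sort
  exact model_essential (M.restrict C)

end HIC

/-- For every infinite cardinal `κ` there is a nondegenerate hereditarily indecomposable
continuum of weight at most `κ` all of whose nondegenerate subcontinua have an essential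
family of cardinality `κ`. -/
theorem exists_hereditarilyIndecomposable_all_subcontinua_essential
    (κ : Cardinal) (hκ : Cardinal.aleph0 ≤ κ) :
    ∃ (H : Type) (_ : TopologicalSpace H), CompactSpace H ∧ T2Space H ∧
      ConnectedSpace H ∧ Nontrivial H ∧ HereditarilyIndecomposable H ∧
      topWeight H ≤ κ ∧
      ∀ C : Set H, IsCompact C → IsConnected C → C.Nontrivial →
        ∃ A B : κ.out → Set ↥C, IsEssentialFamily A B := by
  haveI : Infinite κ.out := by
    rw [Cardinal.infinite_iff, Cardinal.mk_out]; exact hκ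
  obtain ⟨H, hH, h1, h2, h3, h4, h5, h6, h7⟩ := HIC.main_aux κ.out
  rw [Cardinal.mk_out] at h6
  exact ⟨H, hH, h1, h2, h3, h4, h5, h6, h7⟩
end

section
/- For every index set κ, the family {(A_α, B_α) : α ∈ κ} of pairs of opposite faces of the Tychonoff cube [0,1]^κ is essential: for every choice of partitions L_α between A_α and B_α (α ∈ κ), the intersection ⋂_{α∈κ} L_α is nonempty. -/
open Set

namespace CubeEss

variable {ι : Type*} [DecidableEq ι]

/-- unit vector -/
def ee (d : ι) : ι → ℕ := Pi.single d 1

/-- Cup product of the coboundaries of the `s i`, on the chains starting at `x` with directions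
in `D`. -/
def W (s : ι → (ι → ℕ) → ZMod 2) : Finset ι → List ι → (ι → ℕ) → ZMod 2
  | _, [], _ => 1
  | D, i :: l, x => ∑ d ∈ D, (s i (x + ee d) + s i x) * W s (D.erase d) l (x + ee d)

theorem add_self2 (a : ZMod 2) : a + a = 0 := CharTwo.add_self_eq_zero a

theorem sum_swap (D : Finset ι) (F : ι → ι → ZMod 2) :
    ∑ d ∈ D, ∑ c ∈ D.erase d, F d c = ∑ d ∈ D, ∑ c ∈ D.erase d, F c d := by
  apply Finset.sum_comm'
  intro x y
  simp only [Finset.mem_erase]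
  tauto

theorem sum_symm (D : Finset ι) (F : ι → ι → ZMod 2) (hF : ∀ c d, F c d = F d c) :
    ∑ d ∈ D, ∑ c ∈ D.erase d, F d c = 0 := by
  rw [Finset.sum_sigma']
  refine Finset.sum_involution (fun p _ => ⟨p.2, p.1⟩) ?_ ?_ ?_ ?_
  · rintro ⟨a, b⟩ _
    simp only
    rw [hF a b, add_self2]
  · rintro ⟨a, b⟩ h _ h2
    simp only [Finset.mem_sigma, Finset.mem_erase] at h
    simp only [Sigma.mk.injEq] at h2
    exact h.2.1 h2.1
  · rintro ⟨a, b⟩ h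
    simp only [Finset.mem_sigma, Finset.mem_erase] at h ⊢
    exact ⟨h.2.2, fun h' => h.2.1 h'.symm, h.1⟩
  · rintro ⟨a, b⟩ _
    rfl

theorem W_closed (s : ι → (ι → ℕ) → ZMod 2) (l : List ι) : ∀ (D : Finset ι) (x : ι → ℕ),
    ∑ d ∈ D, W s (D.erase d) l (x + ee d) = ∑ d ∈ D, W s (D.erase d) l x := by
  induction l with
  | nil => intro D x; simp [W]
  | cons i l ih =>
    intro D x
    simp only [W, add_mul, Finset.sum_add_distrib]
    rw [sum_symm D (fun d c => s i (x + ee d + ee c) *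
      W s ((D.erase d).erase c) l (x + ee d + ee c))
      (fun c d => by rw [Finset.erase_right_comm, add_right_comm])]
    have h1 : ∑ d ∈ D, ∑ c ∈ D.erase d, s i x * W s ((D.erase d).erase c) l (x + ee c) = 0 := by
      simp only [← Finset.mul_sum, ih]
      rw [sum_symm D (fun d c => W s ((D.erase d).erase c) l x)
        (fun c d => by rw [Finset.erase_right_comm]), mul_zero]
    rw [h1, sum_swap D (fun d c => s i (x + ee c) * W s ((D.erase d).erase c) l (x + ee c)),
      zero_add, add_zero]
    refine Finset.sum_congr rfl fun d _ => ?_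
    rw [← Finset.mul_sum, ih, Finset.mul_sum]
    refine Finset.sum_congr rfl fun c _ => ?_
    rw [Finset.erase_right_comm]

theorem W_stokes (s : ι → (ι → ℕ) → ZMod 2) (i : ι) (l : List ι) (D : Finset ι) (x : ι → ℕ) :
    W s D (i :: l) x = ∑ d ∈ D, (s i (x + ee d) * W s (D.erase d) l (x + ee d)
      + s i x * W s (D.erase d) l x) := by
  simp only [W, add_mul, Finset.sum_add_distrib]
  rw [← Finset.mul_sum, W_closed, Finset.mul_sum]

theorem ee_ne {d c : ι} (h : d ≠ c) (x : ι → ℕ) : (x + ee c) d = x d := by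
  simp [ee, h]

theorem W_zero (s : ι → (ι → ℕ) → ZMod 2) (d : ι) (k : ℕ) (v : ZMod 2)
    (hs : ∀ x : ι → ℕ, x d = k → s d x = v) (l : List ι) : ∀ (D : Finset ι) (x : ι → ℕ),
    d ∈ l → d ∉ D → x d = k → W s D l x = 0 := by
  induction l with
  | nil => intro D x h; simp at h
  | cons i l ih =>
    intro D x hl hD hx
    simp only [W]
    refine Finset.sum_eq_zero fun c hc => ?_
    have hdc : d ≠ c := fun h => hD (h ▸ hc)
    have hx' : (x + ee c) d = k := by rw [ee_ne hdc, hx]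
    by_cases hdi : d = i
    · subst hdi
      rw [hs _ hx', hs _ hx, add_self2, zero_mul]
    · rw [ih (D.erase c) (x + ee c) ((List.mem_cons.1 hl).resolve_left hdi)
        (fun h => hD (Finset.mem_of_mem_erase h)) hx', mul_zero]

theorem W_exists (s : ι → (ι → ℕ) → ZMod 2) (l : List ι) : ∀ (D : Finset ι) (x : ι → ℕ),
    W s D l x ≠ 0 → ∀ i ∈ l, ∃ p q : ι → ℕ, s i p ≠ s i q ∧
      (∀ j, x j ≤ p j ∧ p j ≤ x j + if j ∈ D then 1 else 0) ∧
      (∀ j, x j ≤ q j ∧ q j ≤ x j + if j ∈ D then 1 else 0) := by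
  induction l with
  | nil => intro D x _ i h; simp at h
  | cons i l ih =>
    intro D x hW j hj
    simp only [W] at hW
    obtain ⟨d, hd, hne⟩ := Finset.exists_ne_zero_of_sum_ne_zero hW
    have h1 := left_ne_zero_of_mul hne
    have h2 := right_ne_zero_of_mul hne
    by_cases hji : j = i
    · subst hji
      refine ⟨x + ee d, x, fun h => h1 (by rw [h, add_self2]), fun c => ?_, fun c => ?_⟩
      · by_cases hc : c = d
        · subst hc; simp [ee, hd]
        · rw [ee_ne hc]; simp
      · simp
    · obtain ⟨p, q, hpq, hp, hq⟩ := ih _ _ h2 j ((List.mem_cons.1 hj).resolve_left hji)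
      have key : ∀ p : ι → ℕ, (∀ j, (x + ee d) j ≤ p j ∧
          p j ≤ (x + ee d) j + if j ∈ D.erase d then 1 else 0) →
          (∀ j, x j ≤ p j ∧ p j ≤ x j + if j ∈ D then 1 else 0) := by
        intro p hp c
        have := hp c
        by_cases hc : c = d
        · subst hc
          simp [ee, hd] at this ⊢
          omega
        · rw [ee_ne hc] at this
          simpa [hc] using this
      exact ⟨p, q, hpq, key p hp, key q hq⟩

/-- iterated sum over the box -/
def S (N : ℕ) : List ι → ((ι → ℕ) → ZMod 2) → (ι → ℕ) → ZMod 2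
  | [], G, y => G y
  | i :: l, G, y => ∑ k ∈ Finset.range N, S N l G (Function.update y i k)

theorem S_add (N : ℕ) (l : List ι) (G H : (ι → ℕ) → ZMod 2) : ∀ y,
    S N l (fun x => G x + H x) y = S N l G y + S N l H y := by
  induction l with
  | nil => intro y; rfl
  | cons i l ih => intro y; simp only [S, ih, Finset.sum_add_distrib]

theorem S_sum (N : ℕ) (l : List ι) (D : Finset ι) (G : ι → (ι → ℕ) → ZMod 2) : ∀ y,
    S N l (fun x => ∑ d ∈ D, G d x) y = ∑ d ∈ D, S N l (G d) y := by
  induction l with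
  | nil => intro y; rfl
  | cons i l ih => intro y; simp only [S, ih]; rw [Finset.sum_comm]

theorem S_shift (N : ℕ) (d : ι) (l : List ι) (H : (ι → ℕ) → ZMod 2) : d ∉ l → ∀ y,
    S N l (fun x => H (x + ee d)) y = S N l H (y + ee d) := by
  induction l with
  | nil => intro _ y; rfl
  | cons i l ih =>
    intro hd y
    simp only [List.mem_cons, not_or] at hd
    simp only [S, ih hd.2]
    refine Finset.sum_congr rfl fun k _ => ?_
    congr 1
    ext j
    by_cases hj : j = i
    · subst hj; simp [ee, Ne.symm hd.1]
    · simp [hj]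

theorem S_congr (N : ℕ) (d : ι) (k : ℕ) (l : List ι) (G H : (ι → ℕ) → ZMod 2)
    (h : ∀ x : ι → ℕ, x d = k → G x = H x) : d ∉ l → ∀ y : ι → ℕ, y d = k →
    S N l G y = S N l H y := by
  induction l with
  | nil => intro _ y hy; exact h y hy
  | cons i l ih =>
    intro hd y hy
    simp only [List.mem_cons, not_or] at hd
    simp only [S]
    refine Finset.sum_congr rfl fun k _ => ih hd.2 _ ?_
    simp [hd.1, hy]

theorem S_zero (N : ℕ) (l : List ι) : ∀ y : ι → ℕ, S N l (fun _ => 0) y = 0 := by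
  induction l with
  | nil => intro y; rfl
  | cons i l ih => intro y; simp [S, ih]

theorem S_tele (N : ℕ) (d : ι) (l : List ι) (hd : d ∉ l) (H : (ι → ℕ) → ZMod 2) (y : ι → ℕ) :
    S N (d :: l) (fun x => H (x + ee d) + H x) y =
      S N l H (Function.update y d N) + S N l H (Function.update y d 0) := by
  simp only [S, S_add, S_shift N d l H hd]
  have h : ∀ k, Function.update y d k + ee d = Function.update y d (k + 1) := by
    intro k
    ext j
    by_cases hj : j = d
    · subst hj; simp [ee]
    · simp [ee, hj]
  simp only [h]
  have := Finset.sum_range_sub (fun k => S N l H (Function.update y d k)) N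
  simp only [CharTwo.sub_eq_add] at this
  exact this

theorem S_face (N : ℕ) (d : ι) (l : List ι) (H : (ι → ℕ) → ZMod 2)
    (h0 : ∀ x : ι → ℕ, x d = 0 → H x = 0) (hN : ∀ x : ι → ℕ, x d = N → H x = 0) :
    l.Nodup → d ∈ l → ∀ y, S N l (fun x => H (x + ee d) + H x) y = 0 := by
  induction l with
  | nil => intro _ h; simp at h
  | cons i l ih =>
    intro hl hd y
    rw [List.nodup_cons] at hl
    by_cases hdi : d = i
    · subst hdi
      rw [S_tele N d l hl.1, S_congr N d N l H (fun _ => 0) hN hl.1 _ (by simp),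
        S_congr N d 0 l H (fun _ => 0) h0 hl.1 _ (by simp), S_zero, S_zero, add_zero]
    · simp only [S]
      exact Finset.sum_eq_zero fun k _ => ih hl.2 ((List.mem_cons.1 hd).resolve_left hdi) _

theorem S_W (N : ℕ) (s : ι → (ι → ℕ) → ZMod 2)
    (h0 : ∀ i, ∀ x : ι → ℕ, x i = 0 → s i x = 0)
    (hN : ∀ i, ∀ x : ι → ℕ, x i = N → s i x = 1) (l : List ι) : l.Nodup → ∀ y,
    S N l (W s l.toFinset l) y = 1 := by
  induction l with
  | nil => intro _ y; simp [S, W]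
  | cons i l ih =>
    intro hl y
    have hl' := List.nodup_cons.1 hl
    have e : W s (i :: l).toFinset (i :: l) = fun x => ∑ d ∈ (i :: l).toFinset,
        ((fun z => s i z * W s ((i :: l).toFinset.erase d) l z) (x + ee d) +
         (fun z => s i z * W s ((i :: l).toFinset.erase d) l z) x) := by
      funext x
      exact W_stokes s i l _ x
    rw [e, S_sum, Finset.sum_eq_single i]
    · have hE : (i :: l).toFinset.erase i = l.toFinset := by
        simp [hl'.1]
      rw [hE, S_tele N i l hl'.1 (fun z => s i z * W s l.toFinset l z),
        S_congr N i N l (fun z => s i z * W s l.toFinset l z) (W s l.toFinset l) (fun x hx => by simp [hN i x hx]) hl'.1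
          (Function.update y i N) (by simp),
        S_congr N i 0 l (fun z => s i z * W s l.toFinset l z) (fun _ => 0) (fun x hx => by simp [h0 i x hx]) hl'.1
          (Function.update y i 0) (by simp),
        S_zero, ih hl'.2, add_zero]
    · intro d hd hdi
      have hdl : d ∈ l := by simpa [hdi] using hd
      refine S_face N d (i :: l) (fun z => s i z * W s ((i :: l).toFinset.erase d) l z)
        ?_ ?_ hl (List.mem_cons_of_mem _ hdl) y
      · intro x hx
        rw [W_zero s d 0 0 (h0 d) l _ x hdl (by simp) hx, mul_zero]
      · intro x hx
        rw [W_zero s d N 1 (hN d) l _ x hdl (by simp) hx, mul_zero]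
    · intro h; simp at h

theorem S_exists (N : ℕ) (G : (ι → ℕ) → ZMod 2) (l : List ι) : ∀ y,
    S N l G y ≠ 0 → (∀ i, i ∉ l → y i < N) → ∃ x : ι → ℕ, G x ≠ 0 ∧ ∀ i, x i < N := by
  induction l with
  | nil => intro y h hy; exact ⟨y, h, fun i => hy i (by simp)⟩
  | cons i l ih =>
    intro y h hy
    simp only [S] at h
    obtain ⟨k, hk, hne⟩ := Finset.exists_ne_zero_of_sum_ne_zero h
    refine ih _ hne fun j hj => ?_
    by_cases hji : j = i
    · subst hji; simpa using hk
    · simpa [hji] using hy j (by simp [hji, hj])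

theorem discrete [Fintype ι] (N : ℕ) (s : ι → (ι → ℕ) → ZMod 2)
    (h0 : ∀ i, ∀ x : ι → ℕ, x i = 0 → s i x = 0)
    (hN : ∀ i, ∀ x : ι → ℕ, x i = N → s i x = 1) :
    ∃ x : ι → ℕ, (∀ i, x i < N) ∧ ∀ i, ∃ p q : ι → ℕ, s i p ≠ s i q ∧
      (∀ j, x j ≤ p j ∧ p j ≤ x j + 1) ∧ (∀ j, x j ≤ q j ∧ q j ≤ x j + 1) := by
  have h := S_W N s h0 hN Finset.univ.toList (Finset.nodup_toList _) (fun _ => 0)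
  obtain ⟨x, hx, hlt⟩ := S_exists N _ _ _ (by rw [h]; exact one_ne_zero)
    (fun i hi => absurd (by simp) hi)
  refine ⟨x, hlt, fun i => ?_⟩
  simpa using W_exists s _ _ x hx i (by simp)

/-- grid point -/
noncomputable def gp (N : ℕ) (x : ι → ℕ) : ι → unitInterval :=
  fun i => Set.projIcc (0 : ℝ) 1 zero_le_one ((x i : ℝ) / N)

theorem gp_dist [Fintype ι] (N : ℕ) (hN : 0 < N) (x p : ι → ℕ)
    (hp : ∀ j, x j ≤ p j ∧ p j ≤ x j + 1) : dist (gp N p) (gp N x) ≤ 1 / N := by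
  have hN' : (0 : ℝ) < N := by exact_mod_cast hN
  refine (dist_pi_le_iff (by positivity)).2 fun j => ?_
  have h1 : (x j : ℝ) ≤ p j := by exact_mod_cast (hp j).1
  have h2 : (p j : ℝ) ≤ x j + 1 := by exact_mod_cast (hp j).2
  have h3 : dist (gp N p j) (gp N x j) ≤ |(p j : ℝ) / N - (x j : ℝ) / N| := by
    rw [Subtype.dist_eq, Real.dist_eq]
    exact Set.abs_projIcc_sub_projIcc zero_le_one
  refine h3.trans ?_
  rw [← sub_div, abs_of_nonneg (div_nonneg (by linarith) hN'.le)]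
  gcongr
  linarith

theorem finite_case {F : Type*} [Fintype F] (U V : F → Set (F → unitInterval))
    (hU : ∀ i, IsOpen (U i)) (hV : ∀ i, IsOpen (V i)) (hd : ∀ i, Disjoint (U i) (V i))
    (hA : ∀ i, {x | x i = 0} ⊆ U i) (hB : ∀ i, {x | x i = 1} ⊆ V i) :
    ∃ x, ∀ i, x ∉ U i ∪ V i := by
  classical
  by_contra! hcon
  obtain ⟨δ, hδ, hleb⟩ := lebesgue_number_lemma_of_metric (s := (Set.univ : Set (F → unitInterval)))
    (c := fun b : F × Bool => if b.2 then U b.1 else V b.1) isCompact_univ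
    (by rintro ⟨i, b⟩; cases b <;> simp [hU, hV])
    (by
      intro x _
      obtain ⟨i, hi⟩ := hcon x
      rcases hi with hi | hi
      · exact Set.mem_iUnion.2 ⟨(i, true), by simpa using hi⟩
      · exact Set.mem_iUnion.2 ⟨(i, false), by simpa using hi⟩)
  obtain ⟨n, hn⟩ := exists_nat_one_div_lt hδ
  let N := n + 1
  have hNpos : 0 < N := Nat.succ_pos n
  have hNr : (0 : ℝ) < N := by exact_mod_cast hNpos
  have hNδ : 1 / (N : ℝ) < δ := by simpa [N] using hn
  obtain ⟨x, hx, hpq⟩ := discrete N (fun i x => if gp N x ∈ U i then 0 else 1)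
    (fun i x hxi => by
      have : gp N x ∈ U i := hA i (by simp [gp, hxi])
      simp [this])
    (fun i x hxi => by
      have : gp N x ∈ V i := hB i (by simp [gp, hxi, hNr.ne'])
      have : gp N x ∉ U i := fun h => Set.disjoint_left.1 (hd i) h this
      simp [this])
  obtain ⟨⟨i, b⟩, hib⟩ := hleb (gp N x) (Set.mem_univ _)
  obtain ⟨p, q, hne, hp, hq⟩ := hpq i
  have hpm := hib (Metric.mem_ball.2 ((gp_dist N hNpos x p hp).trans_lt hNδ))
  have hqm := hib (Metric.mem_ball.2 ((gp_dist N hNpos x q hq).trans_lt hNδ))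
  cases b
  · have h1 : gp N p ∉ U i := fun h => Set.disjoint_left.1 (hd i) h (by simpa using hpm)
    have h2 : gp N q ∉ U i := fun h => Set.disjoint_left.1 (hd i) h (by simpa using hqm)
    simp [h1, h2] at hne
  · have h1 : gp N p ∈ U i := by simpa using hpm
    have h2 : gp N q ∈ U i := by simpa using hqm
    simp [h1, h2] at hne

end CubeEss

/-- The pairs of opposite faces of a Tychonoff cube form an essential family. -/
theorem tychonoff_cube_faces_essential
    (κ : Type*) (L : κ → Set (κ → unitInterval))
    (hL : ∀ α, IsPartitionBetween (L α) {x | x α = 0} {x | x α = 1}) :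
    (⋂ α, L α).Nonempty := by
  classical
  choose hC U V hU hV hd hA hB hE using hL
  apply CompactSpace.iInter_nonempty hC
  intro F
  let g : (F → unitInterval) → (κ → unitInterval) :=
    fun x a => if h : a ∈ F then x ⟨a, h⟩ else 0
  have hg : Continuous g := by
    refine continuous_pi fun a => ?_
    by_cases h : a ∈ F
    · simp only [g, h, dite_true]; exact continuous_apply _
    · simp only [g, h, dite_false]; exact continuous_const
  obtain ⟨x, hx⟩ := CubeEss.finite_case (fun i : F => g ⁻¹' (U i)) (fun i : F => g ⁻¹' (V i))
    (fun i => (hU i).preimage hg) (fun i => (hV i).preimage hg)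
    (fun i => (hd i).preimage g)
    (fun i x hx => hA i (by simpa [g] using hx))
    (fun i x hx => hB i (by simpa [g] using hx))
  refine ⟨g x, Set.mem_iInter₂.2 fun a ha => ?_⟩
  by_contra hn
  have : g x ∈ (L a)ᶜ := hn
  rw [hE a] at this
  exact hx ⟨a, ha⟩ this
end

section
/- Let X be a hereditarily indecomposable metrizable continuum with metric ρ, and suppose {(A₀, B₀), (A₁, B₁)} is an essential family in X such that ρ(x, y) > 1 whenever x ∈ Aᵢ and y ∈ Bᵢ for i = 0, 1. Let 𝒩 be a finite pairwise disjoint collection of closed subsets of X, each of diameter at most 1/2. Then there is a subcontinuum of X of diameter at least 1 that is disjoint from every member of 𝒩. -/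
open Set

/-- In a compact Hausdorff space, closed sets not joined by a component are separated by a
clopen set. -/
theorem exists_clopen_sep_of_components {Y : Type*} [TopologicalSpace Y] [CompactSpace Y] [T2Space Y]
    {P Q : Set Y} (hP : IsClosed P) (hQ : IsClosed Q)
    (h : ∀ p ∈ P, ∀ q ∈ Q, q ∉ connectedComponent p) :
    ∃ Z : Set Y, IsClopen Z ∧ P ⊆ Z ∧ Disjoint Z Q := by
  have h1 : ∀ p ∈ P, ∃ Z : Set Y, IsClopen Z ∧ p ∈ Z ∧ Disjoint Z Q := by
    intro p hp
    refine hQ.isCompact.induction_on (p := fun s => ∃ Z : Set Y, IsClopen Z ∧ p ∈ Z ∧ Disjoint Z s)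
      ⟨univ, isClopen_univ, mem_univ _, disjoint_empty _⟩ ?_ ?_ ?_
    · rintro s t hst ⟨Z, hZ, hpZ, hd⟩
      exact ⟨Z, hZ, hpZ, hd.mono_right hst⟩
    · rintro s t ⟨Z, hZ, hpZ, hd⟩ ⟨W, hW, hpW, hd'⟩
      exact ⟨Z ∩ W, hZ.inter hW, ⟨hpZ, hpW⟩, disjoint_union_right.2
        ⟨hd.mono_left inter_subset_left, hd'.mono_left inter_subset_right⟩⟩
    · intro q hq
      have hq' := h p hp q hq
      rw [connectedComponent_eq_iInter_isClopen, mem_iInter] at hq'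
      push Not at hq'
      obtain ⟨⟨Z, hZ, hpZ⟩, hqZ⟩ := hq'
      exact ⟨Zᶜ, mem_nhdsWithin_of_mem_nhds (hZ.compl.isOpen.mem_nhds hqZ), Z, hZ, hpZ,
        disjoint_compl_right⟩
  refine hP.isCompact.induction_on (p := fun s => ∃ Z : Set Y, IsClopen Z ∧ s ⊆ Z ∧ Disjoint Z Q)
      ⟨∅, isClopen_empty, subset_rfl, empty_disjoint _⟩ ?_ ?_ ?_
  · rintro s t hst ⟨Z, hZ, hpZ, hd⟩
    exact ⟨Z, hZ, hst.trans hpZ, hd⟩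
  · rintro s t ⟨Z, hZ, hpZ, hd⟩ ⟨W, hW, hpW, hd'⟩
    exact ⟨Z ∪ W, hZ.union hW, union_subset_union hpZ hpW, disjoint_union_left.2 ⟨hd, hd'⟩⟩
  · intro p hp
    obtain ⟨Z, hZ, hpZ, hd⟩ := h1 p hp
    exact ⟨Z, mem_nhdsWithin_of_mem_nhds (hZ.isOpen.mem_nhds hpZ), Z, hZ, subset_rfl, hd⟩

/-- Disjoint closed sets in a normal space admit a partition. -/
theorem exists_isPartitionBetween {X : Type*} [TopologicalSpace X] [NormalSpace X]
    {A B : Set X} (hA : IsClosed A) (hB : IsClosed B) (h : Disjoint A B) :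
    ∃ L, IsPartitionBetween L A B := by
  obtain ⟨U, V, hU, hV, hAU, hBV, hUV⟩ := normal_separation hA hB h
  exact ⟨(U ∪ V)ᶜ, (hU.union hV).isClosed_compl, U, V, hU, hV, hUV, hAU, hBV, compl_compl _⟩

theorem IsPartitionBetween.mono {X : Type*} [TopologicalSpace X] {L A B A' B' : Set X}
    (h : IsPartitionBetween L A B) (hA : A' ⊆ A) (hB : B' ⊆ B) : IsPartitionBetween L A' B' := by
  obtain ⟨hL, U, V, hU, hV, hUV, hAU, hBV, he⟩ := h
  exact ⟨hL, U, V, hU, hV, hUV, hA.trans hAU, hB.trans hBV, he⟩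

theorem IsPartitionBetween.disjoint_union {X : Type*} [TopologicalSpace X] {L A B : Set X}
    (h : IsPartitionBetween L A B) : Disjoint L (A ∪ B) := by
  obtain ⟨hL, U, V, hU, hV, hUV, hAU, hBV, he⟩ := h
  rw [← subset_compl_iff_disjoint_left, he]
  exact union_subset_union hAU hBV

/-- Given an essential family of two widely separated pairs in a hereditarily
indecomposable metric continuum, every finite disjoint collection of small closed sets
misses some large subcontinuum. -/
theorem exists_large_subcontinuum_missing_small_sets
    (X : Type*) [MetricSpace X] [CompactSpace X] [ConnectedSpace X]
    (hX : HereditarilyIndecomposable X)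
    (A B : Fin 2 → Set X) (hAB : IsEssentialFamily A B)
    (hfar : ∀ i : Fin 2, ∀ x ∈ A i, ∀ y ∈ B i, 1 < dist x y)
    (𝒩 : Finset (Set X))
    (hclosed : ∀ N ∈ 𝒩, IsClosed N)
    (hsmall : ∀ N ∈ 𝒩, Metric.diam N ≤ 1 / 2)
    (hdisj : ∀ N ∈ 𝒩, ∀ M ∈ 𝒩, N ≠ M → Disjoint N M) :
    ∃ C : Set X, IsCompact C ∧ IsConnected C ∧ 1 ≤ Metric.diam C ∧
      ∀ N ∈ 𝒩, Disjoint C N := by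
  classical
  obtain ⟨hA, hB, hd, hess⟩ := hAB
  -- enlarge the first pair so that it absorbs all members of the collection
  let S : Set X := ⋃ N ∈ 𝒩.filter (fun N => (N ∩ A 0).Nonempty), N
  let T : Set X := ⋃ N ∈ 𝒩.filter (fun N => ¬ (N ∩ A 0).Nonempty), N
  have hS : IsClosed S := isClosed_biUnion_finset fun N hN => hclosed N (Finset.mem_filter.1 hN).1
  have hT : IsClosed T := isClosed_biUnion_finset fun N hN => hclosed N (Finset.mem_filter.1 hN).1
  have hST : Disjoint (A 0 ∪ S) (B 0 ∪ T) := by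
    rw [Set.disjoint_left]
    rintro x (hx | hx) (hx' | hx')
    · exact (Set.disjoint_left.1 (hd 0)) hx hx'
    · simp only [T, mem_iUnion, Finset.mem_filter] at hx'
      obtain ⟨N, ⟨hN, hne⟩, hxN⟩ := hx'
      exact hne ⟨x, hxN, hx⟩
    · simp only [S, mem_iUnion, Finset.mem_filter] at hx
      obtain ⟨N, ⟨hN, a, haN, haA⟩, hxN⟩ := hx
      have h1 := hfar 0 a haA x hx'
      have h2 := Metric.dist_le_diam_of_mem (hclosed N hN).isCompact.isBounded haN hxN
      have h3 := hsmall N hN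
      linarith
    · simp only [S, mem_iUnion, Finset.mem_filter] at hx
      simp only [T, mem_iUnion, Finset.mem_filter] at hx'
      obtain ⟨N, ⟨hN, hne⟩, hxN⟩ := hx
      obtain ⟨M, ⟨hM, hMe⟩, hxM⟩ := hx'
      have hNM : N ≠ M := fun e => hMe (e ▸ hne)
      exact Set.disjoint_left.1 (hdisj N hN M hM hNM) hxN hxM
  obtain ⟨L, hL⟩ := exists_isPartitionBetween ((hA 0).union hS) ((hB 0).union hT) hST
  have hLc : IsClosed L := hL.1
  have hLN : ∀ N ∈ 𝒩, Disjoint L N := by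
    intro N hN
    refine hL.disjoint_union.mono_right ?_
    by_cases hne : (N ∩ A 0).Nonempty
    · have : N ⊆ S := fun x hx => by
        simp only [S, mem_iUnion, Finset.mem_filter]; exact ⟨N, ⟨hN, hne⟩, hx⟩
      exact fun x hx => Or.inl (Or.inr (this hx))
    · have : N ⊆ T := fun x hx => by
        simp only [T, mem_iUnion, Finset.mem_filter]; exact ⟨N, ⟨hN, hne⟩, hx⟩
      exact fun x hx => Or.inr (Or.inr (this hx))
  have : CompactSpace L := isCompact_iff_compactSpace.1 hLc.isCompact
  have key : ∃ p : L, (p : X) ∈ A 1 ∧ ∃ q : L, (q : X) ∈ B 1 ∧ q ∈ connectedComponent p := by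
    by_contra hcon
    push Not at hcon
    obtain ⟨Z, hZ, hPZ, hZQ⟩ := exists_clopen_sep_of_components
      (P := ((↑) : L → X) ⁻¹' A 1) (Q := ((↑) : L → X) ⁻¹' B 1)
      ((hA 1).preimage continuous_subtype_val) ((hB 1).preimage continuous_subtype_val)
      (fun p hp q hq => hcon p hp q hq)
    have hc := hLc.isClosedEmbedding_subtypeVal
    have hZ1 : IsClosed (((↑) : L → X) '' Z) := hc.isClosedMap _ hZ.isClosed
    have hZ2 : IsClosed (((↑) : L → X) '' Zᶜ) := hc.isClosedMap _ hZ.compl.isClosed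
    have hdd : Disjoint (A 1 ∪ ((↑) : L → X) '' Z) (B 1 ∪ ((↑) : L → X) '' Zᶜ) := by
      rw [Set.disjoint_left]
      rintro x (hx | ⟨y, hy, rfl⟩) (hx' | ⟨z, hz, hzx⟩)
      · exact (Set.disjoint_left.1 (hd 1)) hx hx'
      · subst hzx
        exact hz (hPZ hx)
      · exact Set.disjoint_left.1 hZQ hy hx'
      · exact hz (Subtype.ext hzx ▸ hy)
    obtain ⟨M, hM⟩ := exists_isPartitionBetween ((hA 1).union hZ1) ((hB 1).union hZ2) hdd
    obtain ⟨x, hx⟩ := hess ![L, M] (by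
      intro i
      fin_cases i
      · exact hL.mono subset_union_left subset_union_left
      · exact hM.mono subset_union_left subset_union_left)
    rw [mem_iInter] at hx
    have hxL : x ∈ L := hx 0
    have hxM : x ∈ M := hx 1
    refine Set.disjoint_left.1 hM.disjoint_union hxM ?_
    by_cases hz : (⟨x, hxL⟩ : L) ∈ Z
    · exact Or.inl (Or.inr ⟨_, hz, rfl⟩)
    · exact Or.inr (Or.inr ⟨_, hz, rfl⟩)
  obtain ⟨p, hp, q, hq, hpq⟩ := key
  have hC : IsCompact (((↑) : L → X) '' connectedComponent p) :=
    isClosed_connectedComponent.isCompact.image continuous_subtype_val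
  refine ⟨((↑) : L → X) '' connectedComponent p, hC,
    isConnected_connectedComponent.image _ continuous_subtype_val.continuousOn, ?_, ?_⟩
  · exact (hfar 1 p hp q hq).le.trans (Metric.dist_le_diam_of_mem hC.isBounded
      ⟨p, mem_connectedComponent, rfl⟩ ⟨q, hpq, rfl⟩)
  · intro N hN
    refine (hLN N hN).mono_left ?_
    rintro _ ⟨y, _, rfl⟩
    exact y.2
end

section
/- Let X be a hereditarily indecomposable metrizable continuum with metric ρ, possessing an essential family {(A₀, B₀), (A₁, B₁)} with ρ(x, y) > 1 whenever x ∈ Aᵢ and y ∈ Bᵢ (i = 0, 1). Let μ : C(X) → ℝ be a Whitney map and let r > 0 be such that every member of the Whitney level 𝒲_r = μ⁻¹(r) is nonempty and has diameter less than 1/2, and put η = min{diam A : A ∈ 𝒲_r}. Then for every positive integer n, every finite cover of 𝒲_r by closed subsets (with respect to the Hausdorff metric), each of diameter less than η/(4n), contains an element that meets at least n other elements of the cover. -/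
open Set

/-- The hyperspace `C(X)` of subcontinua of a metric space `X`, with the topology
induced by the Hausdorff metric (which is the Vietoris topology for compact `X`). -/
abbrev SubcontinuaHyp (X : Type*) [MetricSpace X] : Type _ :=
  {C : TopologicalSpace.NonemptyCompacts X // IsConnected (C : Set X)}

open TopologicalSpace in
lemma isClosed_connected_nc (X : Type*) [MetricSpace X] [CompactSpace X] :
    IsClosed {C : NonemptyCompacts X | IsConnected (C : Set X)} := by
  rw [← isOpen_compl_iff, isOpen_iff_mem_nhds]
  intro K hK
  have hK' : ¬ IsPreconnected (K : Set X) := fun h => hK ⟨K.nonempty, h⟩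
  rw [isPreconnected_closed_iff] at hK'
  push Not at hK'
  obtain ⟨t, t', ht, ht', hsub, hne, hne', hem⟩ := hK'
  have hdis : Disjoint ((K : Set X) ∩ t) ((K : Set X) ∩ t') := by
    rw [Set.disjoint_left]
    rintro x ⟨h1, h2⟩ ⟨_, h3⟩
    have : x ∈ (K : Set X) ∩ (t ∩ t') := ⟨h1, h2, h3⟩
    rw [hem] at this
    exact this
  obtain ⟨U, V, hU, hV, hKU, hKV, hUV⟩ :=
    SeparatedNhds.of_isCompact_isCompact (K.isCompact.inter_right ht) (K.isCompact.inter_right ht')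
      hdis
  have hKsub : (K : Set X) ⊆ U ∪ V := by
    intro x hx
    rcases hsub hx with h | h
    · exact Or.inl (hKU ⟨hx, h⟩)
    · exact Or.inr (hKV ⟨hx, h⟩)
  have o1 := NonemptyCompacts.isOpen_subsets_of_isOpen (hU.union hV)
  have o2 := NonemptyCompacts.isOpen_inter_nonempty_of_isOpen hU
  have o3 := NonemptyCompacts.isOpen_inter_nonempty_of_isOpen hV
  have m2 : ((K : Set X) ∩ U).Nonempty := hne.mono fun x hx => ⟨hx.1, hKU hx⟩
  have m3 : ((K : Set X) ∩ V).Nonempty := hne'.mono fun x hx => ⟨hx.1, hKV hx⟩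
  filter_upwards [o1.mem_nhds hKsub, o2.mem_nhds m2, o3.mem_nhds m3] with L h1 h2 h3 hL
  obtain ⟨x, _, hxU, hxV⟩ := hL.2 U V hU hV h1 h2 h3
  exact Set.disjoint_left.1 hUV hxU hxV

instance compactSpace_subcontinuaHyp (X : Type*) [MetricSpace X] [CompactSpace X] :
    CompactSpace (SubcontinuaHyp X) :=
  isCompact_iff_compactSpace.1 (isClosed_connected_nc X).isCompact

/-- Cut-wire theorem in a compact Hausdorff space. -/
lemma cut_wire_aux {Y : Type*} [TopologicalSpace Y] [CompactSpace Y] [T2Space Y]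
    {E F : Set Y} (hE : IsClosed E) (hF : IsClosed F)
    (h : ∀ x ∈ E, Disjoint (connectedComponent x) F) :
    ∃ s : Set Y, IsClopen s ∧ E ⊆ s ∧ Disjoint s F := by
  let q : Y → ConnectedComponents Y := (↑)
  have hq : Continuous q := ConnectedComponents.continuous_coe
  have hE' : IsClosed (q '' E) := (hE.isCompact.image hq).isClosed
  have hF' : IsClosed (q '' F) := (hF.isCompact.image hq).isClosed
  have hsub : q '' E ⊆ (q '' F)ᶜ := by
    rintro _ ⟨x, hx, rfl⟩ ⟨y, hy, hxy⟩
    have hy' : y ∈ connectedComponent x := by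
      rw [← ConnectedComponents.coe_eq_coe.1 hxy]
      exact mem_connectedComponent
    exact Set.disjoint_left.1 (h x hx) hy' hy
  obtain ⟨D, hD, h1, h2⟩ := exists_clopen_of_closed_subset_open hE' hF'.isOpen_compl hsub
  refine ⟨q ⁻¹' D, hD.preimage hq, fun x hx => h1 ⟨x, hx, rfl⟩, ?_⟩
  rw [Set.disjoint_left]
  exact fun x hx hxF => h2 hx ⟨x, hxF, rfl⟩

lemma cut_wire {X : Type*} [TopologicalSpace X] [T2Space X]
    {K E F : Set X} (hK : IsCompact K) (hE : IsClosed E) (hF : IsClosed F)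
    (h : ∀ C ⊆ K, IsCompact C → IsConnected C → (C ∩ E).Nonempty → (C ∩ F).Nonempty → False) :
    ∃ P Q : Set X, IsClosed P ∧ IsClosed Q ∧ Disjoint P Q ∧ K = P ∪ Q ∧ K ∩ E ⊆ P ∧ K ∩ F ⊆ Q := by
  have : CompactSpace K := isCompact_iff_compactSpace.1 hK
  obtain ⟨s, hs, h1, h2⟩ := cut_wire_aux (Y := K) (E := (↑) ⁻¹' E) (F := (↑) ⁻¹' F)
    (hE.preimage continuous_subtype_val) (hF.preimage continuous_subtype_val) (by
      intro x hx
      rw [Set.disjoint_left]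
      intro y hy hyF
      refine h ((↑) '' connectedComponent x) (by rintro _ ⟨z, _, rfl⟩; exact z.2)
        (isClosed_connectedComponent.isCompact.image continuous_subtype_val)
        (isConnected_connectedComponent.image _ continuous_subtype_val.continuousOn)
        ⟨x, ⟨x, mem_connectedComponent, rfl⟩, hx⟩ ⟨y, ⟨y, hy, rfl⟩, hyF⟩)
  refine ⟨(↑) '' s, (↑) '' sᶜ, (hs.1.isCompact.image continuous_subtype_val).isClosed,
    (hs.compl.1.isCompact.image continuous_subtype_val).isClosed, ?_, ?_, ?_, ?_⟩
  · exact (Set.disjoint_image_iff Subtype.val_injective).2 disjoint_compl_right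
  · rw [← Set.image_union, Set.union_compl_self, Set.image_univ, Subtype.range_coe]
  · rintro x ⟨hx, hxE⟩
    exact ⟨⟨x, hx⟩, h1 hxE, rfl⟩
  · rintro x ⟨hx, hxF⟩
    exact ⟨⟨x, hx⟩, fun h => Set.disjoint_left.1 h2 h hxF, rfl⟩

/-- Between two nested subcontinua there is a strictly intermediate one. -/
lemma exists_between_continua {X : Type*} [TopologicalSpace X] [CompactSpace X] [T2Space X]
    {D E : Set X} (hD : IsCompact D) (hDc : IsConnected D) (hE : IsCompact E)
    (hEc : IsConnected E) (hDE : D ⊂ E) :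
    ∃ M : Set X, IsCompact M ∧ IsConnected M ∧ D ⊂ M ∧ M ⊂ E := by
  obtain ⟨y, hyE, hyD⟩ := Set.exists_of_ssubset hDE
  obtain ⟨U, hU, hDU, hUy⟩ := normal_exists_closure_subset hD.isClosed
    (isOpen_compl_singleton (x := y)) (by intro x hx hxy; exact hyD (hxy ▸ hx))
  have hyU : y ∉ closure U := fun h => hUy h rfl
  by_contra hno
  have hM : IsCompact (closure U ∩ E) := hE.inter_left isClosed_closure
  obtain ⟨P, Q, hP, hQ, hPQ, hKPQ, hP', hQ'⟩ := cut_wire hM hD.isClosed hU.isClosed_compl (by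
    rintro C hCM hC hCc ⟨d, hdC, hdD⟩ ⟨z, hzC, hzU⟩
    apply hno
    refine ⟨D ∪ C, hD.union hC, IsConnected.union ⟨d, hdD, hdC⟩ hDc hCc, ?_, ?_⟩
    · exact ⟨Set.subset_union_left, fun h => hzU (hDU (h (Or.inr hzC)))⟩
    · refine ⟨Set.union_subset hDE.1 fun x hx => (hCM hx).2, fun h => ?_⟩
      rcases h hyE with h | h
      · exact hyD h
      · exact hyU (hCM h).1)
  obtain ⟨d, hd⟩ := hDc.nonempty
  have hdP : d ∈ P := hP' ⟨⟨subset_closure (hDU hd), hDE.1 hd⟩, hd⟩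
  obtain ⟨x, hxE, hxP, hx⟩ := isPreconnected_closed_iff.1 hEc.2 P (Q ∪ Uᶜ) hP
    (hQ.union hU.isClosed_compl) (by
      intro x hx
      by_cases hxU : x ∈ U
      · have : x ∈ P ∪ Q := hKPQ ▸ ⟨subset_closure hxU, hx⟩
        rcases this with h | h
        · exact Or.inl h
        · exact Or.inr (Or.inl h)
      · exact Or.inr (Or.inr hxU))
    ⟨d, hDE.1 hd, hdP⟩ ⟨y, hyE, Or.inr fun h => hyU (subset_closure h)⟩
  have hxK : x ∈ closure U ∩ E := hKPQ ▸ Or.inl hxP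
  rcases hx with hx | hx
  · exact Set.disjoint_left.1 hPQ hxP hx
  · exact Set.disjoint_left.1 hPQ hxP (hQ' ⟨hxK, hx⟩)

/-- In a connected compact set of diameter at least `η`, fewer than `n` open balls of radius
`η / (2 n)` leave a point uncovered. -/
lemma exists_far_point {X : Type*} [MetricSpace X] {C : Set X} (hC : IsCompact C)
    (hCc : IsConnected C) {η : ℝ} (hη : 0 < η) (hd : η ≤ Metric.diam C) {n : ℕ} (hn : 0 < n)
    (P : Finset X) (hP : P.card < n) :
    ∃ x ∈ C, ∀ p ∈ P, η / (2 * n) ≤ dist x p := by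
  by_contra hno
  push Not at hno
  have hn' : (0 : ℝ) < n := by exact_mod_cast hn
  obtain ⟨a, ha, b, hb, hab⟩ : ∃ a ∈ C, ∃ b ∈ C, Metric.diam C ≤ dist a b := by
    obtain ⟨p, hp, hmax⟩ := (hC.prod hC).exists_isMaxOn (hCc.nonempty.prod hCc.nonempty)
      (f := fun p : X × X => dist p.1 p.2) (by fun_prop)
    refine ⟨p.1, hp.1, p.2, hp.2, Metric.diam_le_of_forall_dist_le dist_nonneg ?_⟩
    intro x hx y hy
    exact hmax (Set.mk_mem_prod hx hy)
  have hcover : Set.Icc 0 η ⊆ (fun x => dist a x) '' C := by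
    have := hCc.2.intermediate_value ha hb (f := fun x => dist a x) (by fun_prop)
    rw [dist_self] at this
    exact (Set.Icc_subset_Icc_right (hd.trans hab)).trans this
  have hpt : ∀ k : ℕ, k < n → ∃ p ∈ P, |k * (η / n) - dist a p| < η / (2 * n) := by
    intro k hk
    have hk' : (k : ℝ) ≤ n := by exact_mod_cast hk.le
    obtain ⟨x, hx, hxk⟩ := hcover (show (k * (η / n) : ℝ) ∈ Set.Icc 0 η from by
      refine ⟨by positivity, ?_⟩
      rw [mul_div_assoc', div_le_iff₀ hn']
      nlinarith)
    obtain ⟨p, hp, hxp⟩ := hno x hx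
    refine ⟨p, hp, lt_of_le_of_lt ?_ hxp⟩
    rw [← hxk]
    simpa [dist_comm] using abs_dist_sub_le x p a
  have : Nonempty X := ⟨a⟩
  choose! g hg hg' using hpt
  obtain ⟨i, hi, j, hj, hij, hgij⟩ := Finset.exists_ne_map_eq_of_card_lt_of_maps_to
    (s := Finset.range n) (t := P) (by simpa using hP) (f := g)
    (fun k hk => hg k (by simpa using hk))
  have h1 := hg' i (by simpa using hi)
  have h2 := hg' j (by simpa using hj)
  rw [hgij] at h1
  have h3 : |(i : ℝ) - j| * (η / n) < η / n := by
    have : η / (n : ℝ) = η / (2 * n) + η / (2 * n) := by field_simp; norm_num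
    have h0 : |(i : ℝ) - j| * (η / n) = |(i * (η / n) - dist a (g j)) - (j * (η / n) - dist a (g j))| := by
      rw [← abs_of_pos (show 0 < η / (n : ℝ) by positivity), ← abs_mul]
      rw [abs_of_pos (show 0 < η / (n : ℝ) by positivity)]
      congr 1; ring
    rw [h0]
    refine lt_of_le_of_lt (abs_sub _ _) ?_
    linarith
  have h4 : (1 : ℝ) ≤ |(i : ℝ) - j| := by
    have : (1 : ℤ) ≤ |(i : ℤ) - j| := Int.one_le_abs (by omega)
    exact_mod_cast this
  have h5 : 0 < η / (n : ℝ) := by positivity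
  nlinarith

lemma whitney_fibre_unique {X : Type*} [MetricSpace X]
    (hX : HereditarilyIndecomposable X) (μ : SubcontinuaHyp X → ℝ)
    (hμmono : ∀ C D : SubcontinuaHyp X, (C.1 : Set X) ⊂ (D.1 : Set X) → μ C < μ D)
    {C D : SubcontinuaHyp X} (hCD : μ C = μ D) (h : ((C.1 : Set X) ∩ D.1).Nonempty) : C = D := by
  apply Subtype.ext
  apply SetLike.coe_injective
  rcases hX _ _ C.1.isCompact C.2 D.1.isCompact D.2 h with h | h
  · by_contra hne
    exact (hμmono C D (h.ssubset_of_ne hne)).ne hCD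
  · by_contra hne
    exact (hμmono D C (h.ssubset_of_ne (Ne.symm hne))).ne hCD.symm

open TopologicalSpace in
lemma whitney_fibre_exists {X : Type*} [MetricSpace X] [CompactSpace X] [ConnectedSpace X]
    (hX : HereditarilyIndecomposable X)
    (μ : SubcontinuaHyp X → ℝ) (hμcont : Continuous μ)
    (hμ0 : ∀ (C : SubcontinuaHyp X) (x : X), (C.1 : Set X) = {x} → μ C = 0)
    (hμmono : ∀ C D : SubcontinuaHyp X, (C.1 : Set X) ⊂ (D.1 : Set X) → μ C < μ D)
    (r : ℝ) (hr : 0 < r) (hex : ∃ C : SubcontinuaHyp X, μ C = r) (x : X) :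
    ∃ C : SubcontinuaHyp X, x ∈ (C.1 : Set X) ∧ μ C = r := by
  have hmono' : ∀ C D : SubcontinuaHyp X, (C.1 : Set X) ⊆ (D.1 : Set X) → μ C ≤ μ D := by
    intro C D h
    by_cases he : (C.1 : Set X) = D.1
    · have : C = D := Subtype.ext (SetLike.coe_injective he)
      rw [this]
    · exact (hμmono C D (h.ssubset_of_ne he)).le
  have hxc : IsClosed {C : SubcontinuaHyp X | x ∈ (C.1 : Set X)} := by
    have := (NonemptyCompacts.isClosed_inter_nonempty_of_isClosed
      (isClosed_singleton (x := x))).preimage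
      (continuous_subtype_val : Continuous (fun C : SubcontinuaHyp X => C.1))
    convert this using 1
    ext C
    simp
  let S : SubcontinuaHyp X := ⟨⟨⟨{x}, isCompact_singleton⟩, Set.singleton_nonempty x⟩,
    isConnected_singleton⟩
  let T : SubcontinuaHyp X := ⟨⟨⟨Set.univ, isCompact_univ⟩, ⟨x, trivial⟩⟩, isConnected_univ⟩
  have hS : μ S ≤ r := by rw [hμ0 S x rfl]; exact hr.le
  have hT : r ≤ μ T := by
    obtain ⟨C, hC⟩ := hex
    rw [← hC]
    exact hmono' _ _ (Set.subset_univ _)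
  obtain ⟨D, ⟨hxD, hDr⟩, hDmax⟩ := ((hxc.inter (isClosed_Iic.preimage hμcont)).isCompact :
    IsCompact ({C : SubcontinuaHyp X | x ∈ (C.1 : Set X)} ∩ μ ⁻¹' Set.Iic r)).exists_isMaxOn
    ⟨S, rfl, hS⟩ hμcont.continuousOn
  obtain ⟨E, ⟨hxE, hEr⟩, hEmin⟩ := ((hxc.inter (isClosed_Ici.preimage hμcont)).isCompact :
    IsCompact ({C : SubcontinuaHyp X | x ∈ (C.1 : Set X)} ∩ μ ⁻¹' Set.Ici r)).exists_isMinOn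
    ⟨T, trivial, hT⟩ hμcont.continuousOn
  simp only [Set.mem_preimage, Set.mem_Iic, Set.mem_Ici, Set.mem_ofPred_eq] at hxD hDr hxE hEr
  by_contra hno
  push Not at hno
  have hDr' : μ D < r := lt_of_le_of_ne hDr (hno D hxD)
  have hEr' : r < μ E := lt_of_le_of_ne hEr (Ne.symm (hno E hxE))
  have hDE : (D.1 : Set X) ⊂ E.1 := by
    rcases hX _ _ D.1.isCompact D.2 E.1.isCompact E.2 ⟨x, hxD, hxE⟩ with h | h
    · refine h.ssubset_of_ne fun he => ?_
      have : D = E := Subtype.ext (SetLike.coe_injective he)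
      rw [this] at hDr'
      linarith
    · have := hmono' _ _ h
      linarith
  obtain ⟨M, hM, hMc, hDM, hME⟩ :=
    exists_between_continua D.1.isCompact D.2 E.1.isCompact E.2 hDE
  let M' : SubcontinuaHyp X := ⟨⟨⟨M, hM⟩, hMc.nonempty⟩, hMc⟩
  have h1 : μ D < μ M' := hμmono D M' hDM
  have h2 : μ M' < μ E := hμmono M' E hME
  have hxM : x ∈ (M'.1 : Set X) := hDM.1 hxD
  rcases le_total (μ M') r with h | h
  · have := hDmax (show M' ∈ _ from ⟨hxM, h⟩)
    simp only [Set.mem_ofPred_eq] at this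
    linarith
  · have := hEmin (show M' ∈ _ from ⟨hxM, h⟩)
    simp only [Set.mem_ofPred_eq] at this
    linarith

lemma greedy_points {X : Type*} [MetricSpace X] [CompactSpace X]
    [Nonempty X] {η : ℝ} (hη : 0 < η) {n : ℕ} (hn : 0 < n)
    (F : Finset (Set (SubcontinuaHyp X)))
    (hdiam : ∀ S ∈ F, ∀ C ∈ S, η ≤ Metric.diam (C.1 : Set X))
    (hfew : ∀ S ∈ F, {T | T ∈ F ∧ T ≠ S ∧ (S ∩ T).Nonempty}.ncard < n) :
    ∀ G : Finset (Set (SubcontinuaHyp X)), G ⊆ F →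
      ∃ p : Set (SubcontinuaHyp X) → X,
        (∀ S ∈ G, S.Nonempty → ∃ C ∈ S, p S ∈ (C.1 : Set X)) ∧
        ∀ S ∈ G, ∀ T ∈ G, S ≠ T → (S ∩ T).Nonempty → η / (2 * n) ≤ dist (p S) (p T) := by
  classical
  intro G
  induction G using Finset.induction_on with
  | empty => intro _; exact ⟨fun _ => Classical.arbitrary X, by simp, by simp⟩
  | insert S G hSG ih =>
    intro hsub
    obtain ⟨p, hp1, hp2⟩ := ih ((Finset.subset_insert _ _).trans hsub)
    have hSF : S ∈ F := hsub (Finset.mem_insert_self _ _)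
    by_cases hne : S.Nonempty
    swap
    · refine ⟨p, ?_, ?_⟩
      · intro T hT hTne
        rcases Finset.mem_insert.1 hT with rfl | h
        · exact absurd hTne hne
        · exact hp1 T h hTne
      · intro T hT U hU hTU hinter
        rcases Finset.mem_insert.1 hT with rfl | h
        · exact absurd hinter.left hne
        · rcases Finset.mem_insert.1 hU with rfl | h'
          · exact absurd hinter.right hne
          · exact hp2 T h U h' hTU hinter
    obtain ⟨C, hC⟩ := hne
    let N := F.filter fun T => T ≠ S ∧ (S ∩ T).Nonempty
    have hN : N.card < n := by
      have := hfew S hSF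
      rw [← Set.ncard_coe_finset]
      convert this using 2
      ext T
      simp [N]
    obtain ⟨x, hxC, hx⟩ := exists_far_point C.1.isCompact C.2 hη (hdiam S hSF C hC) hn
      (N.image p) (lt_of_le_of_lt Finset.card_image_le hN)
    have hx' : ∀ T ∈ G, (S ∩ T).Nonempty → η / (2 * n) ≤ dist x (p T) := by
      intro T hT hST
      apply hx
      apply Finset.mem_image_of_mem
      simp only [N, Finset.mem_filter]
      exact ⟨hsub (Finset.mem_insert_of_mem hT), fun h => hSG (h ▸ hT), hST⟩
    have hupd : ∀ T ∈ G, Function.update p S x T = p T := fun T hT =>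
      Function.update_of_ne (show T ≠ S from fun h => hSG (h ▸ hT)) _ _
    refine ⟨Function.update p S x, ?_, ?_⟩
    · intro T hT hTne
      rcases Finset.mem_insert.1 hT with rfl | h
      · exact ⟨C, hC, by simpa using hxC⟩
      · rw [hupd T h]
        exact hp1 T h hTne
    · intro T hT U hU hTU hinter
      rcases Finset.mem_insert.1 hT with rfl | h
      · rcases Finset.mem_insert.1 hU with rfl | h'
        · exact absurd rfl hTU
        · rw [hupd U h', Function.update_self]
          exact hx' U h' hinter
      · rcases Finset.mem_insert.1 hU with rfl | h'
        · rw [hupd T h, Function.update_self, dist_comm]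
          exact hx' T h (by rwa [Set.inter_comm])
        · rw [hupd T h, hupd U h']
          exact hp2 T h U h' hTU hinter

/-- Disjoint closed sets in a normal space have a partition between them, missing both. -/
lemma exists_partition {X : Type*} [TopologicalSpace X] [NormalSpace X] {P Q : Set X}
    (hP : IsClosed P) (hQ : IsClosed Q) (h : Disjoint P Q) :
    ∃ L : Set X, IsClosed L ∧ Disjoint L P ∧ Disjoint L Q ∧
      ∀ A ⊆ P, ∀ B ⊆ Q, IsPartitionBetween L A B := by
  obtain ⟨U, V, hU, hV, hPU, hQV, hUV⟩ := normal_separation hP hQ h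
  refine ⟨(U ∪ V)ᶜ, (hU.union hV).isClosed_compl, ?_, ?_, ?_⟩
  · rw [Set.disjoint_left]
    exact fun x hx hxP => hx (Or.inl (hPU hxP))
  · rw [Set.disjoint_left]
    exact fun x hx hxP => hx (Or.inr (hQV hxP))
  · intro A hA B hB
    exact ⟨(hU.union hV).isClosed_compl, U, V, hU, hV, hUV, hA.trans hPU, hB.trans hQV,
      compl_compl _⟩

/-- Every partition between `A 0` and `B 0` contains a continuum meeting `A 1` and `B 1`. -/
lemma exists_continuum_in_partition {X : Type*} [TopologicalSpace X] [CompactSpace X] [T2Space X]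
    {A B : Fin 2 → Set X} (hAB : IsEssentialFamily A B) {L : Set X}
    (hL : IsPartitionBetween L (A 0) (B 0)) :
    ∃ C ⊆ L, IsCompact C ∧ IsConnected C ∧ (C ∩ A 1).Nonempty ∧ (C ∩ B 1).Nonempty := by
  by_contra hno
  obtain ⟨hA, hB, hdis, hess⟩ := hAB
  obtain ⟨P, Q, hP, hQ, hPQ, hLPQ, h1, h2⟩ := cut_wire hL.1.isCompact (hA 1) (hB 1)
    (fun C h1 h2 h3 h4 h5 => hno ⟨C, h1, h2, h3, h4, h5⟩)
  have hd : Disjoint (A 1 ∪ P) (B 1 ∪ Q) := by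
    rw [Set.disjoint_left]
    rintro x (hx | hx) (hy | hy)
    · exact Set.disjoint_left.1 (hdis 1) hx hy
    · exact Set.disjoint_left.1 hPQ (h1 ⟨hLPQ ▸ Or.inr hy, hx⟩) hy
    · exact Set.disjoint_left.1 hPQ hx (h2 ⟨hLPQ ▸ Or.inl hx, hy⟩)
    · exact Set.disjoint_left.1 hPQ hx hy
  obtain ⟨L', hL', hd1, hd2, hpart⟩ := exists_partition ((hA 1).union hP) ((hB 1).union hQ) hd
  obtain ⟨x, hx⟩ := hess ![L, L'] (by
    intro i
    fin_cases i
    · exact hL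
    · exact hpart _ Set.subset_union_left _ Set.subset_union_left)
  rw [Set.mem_iInter] at hx
  have hx0 : x ∈ L := hx 0
  have hx1 : x ∈ L' := hx 1
  rw [hLPQ] at hx0
  rcases hx0 with h | h
  · exact Set.disjoint_left.1 hd1 hx1 (Or.inr h)
  · exact Set.disjoint_left.1 hd2 hx1 (Or.inr h)

/-- Kelley: in a suitable Whitney level of a two-dimensional hereditarily indecomposable
continuum, every finite closed cover of mesh less than `η/(4n)` has an element meeting at
least `n` other elements. -/
theorem whitney_level_cover_has_crowded_element
    (X : Type*) [MetricSpace X] [CompactSpace X] [ConnectedSpace X]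
    (hX : HereditarilyIndecomposable X)
    (A B : Fin 2 → Set X) (hAB : IsEssentialFamily A B)
    (hfar : ∀ i : Fin 2, ∀ x ∈ A i, ∀ y ∈ B i, 1 < dist x y)
    (μ : SubcontinuaHyp X → ℝ) (hμcont : Continuous μ)
    (hμ0 : ∀ (C : SubcontinuaHyp X) (x : X), (C.1 : Set X) = {x} → μ C = 0)
    (hμmono : ∀ C D : SubcontinuaHyp X, (C.1 : Set X) ⊂ (D.1 : Set X) → μ C < μ D)
    (r : ℝ) (hr : 0 < r)
    (hsmall : ∀ C : SubcontinuaHyp X, μ C = r → Metric.diam (C.1 : Set X) < 1 / 2)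
    (η : ℝ)
    (hηmem : ∃ C : SubcontinuaHyp X, μ C = r ∧ Metric.diam (C.1 : Set X) = η)
    (hηmin : ∀ C : SubcontinuaHyp X, μ C = r → η ≤ Metric.diam (C.1 : Set X))
    (n : ℕ) (hn : 0 < n)
    (F : Finset (Set (SubcontinuaHyp X)))
    (hFclosed : ∀ S ∈ F, IsClosed S)
    (hFsub : ∀ S ∈ F, S ⊆ {C : SubcontinuaHyp X | μ C = r})
    (hFmesh : ∀ S ∈ F, Metric.diam S < η / (4 * n))
    (hFcover : {C : SubcontinuaHyp X | μ C = r} ⊆ ⋃ S ∈ F, S) :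
    ∃ S ∈ F, n ≤ {T | T ∈ F ∧ T ≠ S ∧ (S ∩ T).Nonempty}.ncard := by
  classical
  by_contra hno
  push Not at hno
  have hn' : (0 : ℝ) < n := by exact_mod_cast hn
  have hη : 0 < η := by
    obtain ⟨C, hC, _⟩ := hηmem
    obtain ⟨S, hS, _⟩ := Set.mem_iUnion₂.1 (hFcover (show C ∈ _ from hC))
    have h1 := (Metric.diam_nonneg (s := S)).trans_lt (hFmesh S hS)
    by_contra h
    push Not at h
    have : η / (4 * n) ≤ 0 := div_nonpos_of_nonpos_of_nonneg h (by positivity)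
    linarith
  have hη2 : η < 1 / 2 := by
    obtain ⟨C, hC, hCd⟩ := hηmem
    rw [← hCd]
    exact hsmall C hC
  obtain ⟨p, hp1, hp2⟩ := greedy_points hη hn F
    (fun S hS C hC => hηmin C (hFsub S hS hC)) hno F (Finset.Subset.refl _)
  -- the spots
  let G : Set (SubcontinuaHyp X) → Set X := fun S =>
    Metric.closedBall (p S) (Metric.diam S) ∩ ⋃ C ∈ S, (C.1 : Set X)
  have hGclosed : ∀ S ∈ F, IsClosed (G S) := by
    intro S hS
    refine Metric.isClosed_closedBall.inter ?_
    have := (TopologicalSpace.NonemptyCompacts.isCompact_biUnion_coe_of_isCompact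
      ((hFclosed S hS).isCompact.image continuous_subtype_val)).isClosed
    rwa [Set.biUnion_image] at this
  have hGdisj : ∀ S ∈ F, ∀ T ∈ F, S ≠ T → Disjoint (G S) (G T) := by
    intro S hS T hT hST
    rw [Set.disjoint_left]
    rintro x ⟨hx1, hx2⟩ ⟨hx3, hx4⟩
    obtain ⟨C, hC, hxC⟩ := Set.mem_iUnion₂.1 hx2
    obtain ⟨D, hD, hxD⟩ := Set.mem_iUnion₂.1 hx4
    have hCr : μ C = r := hFsub S hS hC
    have hDr : μ D = r := hFsub T hT hD
    have hCD : C = D := whitney_fibre_unique hX μ hμmono (hCr.trans hDr.symm) ⟨x, hxC, hxD⟩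
    have h1 := hp2 S hS T hT hST ⟨C, hC, hCD ▸ hD⟩
    have h2 := dist_triangle_right (p S) (p T) x
    rw [Metric.mem_closedBall, dist_comm] at hx1 hx3
    have h3 := hFmesh S hS
    have h4 := hFmesh T hT
    have h5 : η / (2 * (n : ℝ)) = η / (4 * n) + η / (4 * n) := by field_simp; norm_num
    linarith
  have hGmeet : ∀ S ∈ F, ∀ C ∈ S, ((C.1 : Set X) ∩ G S).Nonempty := by
    intro S hS C hC
    obtain ⟨D, hD, hpD⟩ := hp1 S hS ⟨C, hC⟩
    obtain ⟨y, hy, hdy⟩ := C.1.isCompact.exists_infDist_eq_dist C.1.nonempty (p S)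
    have h1 : Metric.infDist (p S) (C.1 : Set X) ≤ dist D C := by
      refine Metric.infDist_le_hausdorffDist_of_mem hpD ?_
      exact Metric.hausdorffEDist_ne_top_of_nonempty_of_bounded D.1.nonempty C.1.nonempty
        D.1.isCompact.isBounded C.1.isCompact.isBounded
    have h2 : dist D C ≤ Metric.diam S :=
      Metric.dist_le_diam_of_mem (hFclosed S hS).isCompact.isBounded hD hC
    refine ⟨y, hy, ?_, Set.mem_iUnion₂.2 ⟨C, hC, hy⟩⟩
    rw [Metric.mem_closedBall, dist_comm, ← hdy]
    exact h1.trans h2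
  have hGsmall : ∀ S ∈ F, ∀ x ∈ G S, ∀ y ∈ G S, dist x y ≤ 1 := by
    rintro S hS x ⟨hx, _⟩ y ⟨hy, _⟩
    rw [Metric.mem_closedBall] at hx hy
    have h1 := dist_triangle_right x y (p S)
    have h2 := hFmesh S hS
    have h3 : η / (4 * (n : ℝ)) ≤ η / 4 := by
      have : (1 : ℝ) ≤ n := by exact_mod_cast hn
      apply div_le_div_of_nonneg_left hη.le (by norm_num)
      linarith
    linarith
  -- the enlarged pair
  let F₁ := F.filter fun S => (G S ∩ A 0).Nonempty
  let F₂ := F.filter fun S => ¬ (G S ∩ A 0).Nonempty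
  have hAB' := hAB
  obtain ⟨hA, hB, hdis, -⟩ := hAB'
  have hc1 : IsClosed (A 0 ∪ ⋃ S ∈ F₁, G S) :=
    (hA 0).union (isClosed_biUnion_finset fun S hS => hGclosed S (Finset.mem_filter.1 hS).1)
  have hc2 : IsClosed (B 0 ∪ ⋃ S ∈ F₂, G S) :=
    (hB 0).union (isClosed_biUnion_finset fun S hS => hGclosed S (Finset.mem_filter.1 hS).1)
  have hd : Disjoint (A 0 ∪ ⋃ S ∈ F₁, G S) (B 0 ∪ ⋃ S ∈ F₂, G S) := by
    rw [Set.disjoint_left]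
    rintro x (hx | hx) (hy | hy)
    · exact Set.disjoint_left.1 (hdis 0) hx hy
    · obtain ⟨S, hS, hxS⟩ := Set.mem_iUnion₂.1 hy
      exact (Finset.mem_filter.1 hS).2 ⟨x, hxS, hx⟩
    · obtain ⟨S, hS, hxS⟩ := Set.mem_iUnion₂.1 hx
      obtain ⟨hSF, a, haS, ha⟩ := Finset.mem_filter.1 hS
      have h1 := hGsmall S hSF a haS x hxS
      have h2 := hfar 0 a ha x hy
      linarith
    · obtain ⟨S, hS, hxS⟩ := Set.mem_iUnion₂.1 hx
      obtain ⟨T, hT, hxT⟩ := Set.mem_iUnion₂.1 hy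
      obtain ⟨hSF, hS'⟩ := Finset.mem_filter.1 hS
      obtain ⟨hTF, hT'⟩ := Finset.mem_filter.1 hT
      exact Set.disjoint_left.1 (hGdisj S hSF T hTF fun h => hT' (h ▸ hS')) hxS hxT
  obtain ⟨L, hL, hd1, hd2, hpart⟩ := exists_partition hc1 hc2 hd
  obtain ⟨K, hKL, hK, hKc, ⟨a, haK, ha⟩, ⟨b, hbK, hb⟩⟩ := exists_continuum_in_partition hAB
    (hpart (A 0) Set.subset_union_left (B 0) Set.subset_union_left)
  obtain ⟨W, haW, hWr⟩ := whitney_fibre_exists hX μ hμcont hμ0 hμmono r hr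
    (hηmem.imp fun C h => h.1) a
  have hWK : (W.1 : Set X) ⊆ K := by
    rcases hX _ _ W.1.isCompact W.2 hK hKc ⟨a, haW, haK⟩ with h | h
    · exact h
    · exfalso
      have h1 := Metric.dist_le_diam_of_mem W.1.isCompact.isBounded (h haK) (h hbK)
      have h2 := hsmall W hWr
      have h3 := hfar 1 a ha b hb
      linarith
  obtain ⟨S, hS, hWS⟩ := Set.mem_iUnion₂.1 (hFcover (show W ∈ _ from hWr))
  obtain ⟨y, hyW, hyG⟩ := hGmeet S hS W hWS
  have hyL : y ∈ L := hKL (hWK hyW)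
  by_cases hSA : (G S ∩ A 0).Nonempty
  · exact Set.disjoint_left.1 hd1 hyL
      (Or.inr (Set.mem_iUnion₂.2 ⟨S, Finset.mem_filter.2 ⟨hS, hSA⟩, hyG⟩))
  · exact Set.disjoint_left.1 hd2 hyL
      (Or.inr (Set.mem_iUnion₂.2 ⟨S, Finset.mem_filter.2 ⟨hS, hSA⟩, hyG⟩))
end

section
/- Let X be a hereditarily indecomposable metrizable continuum possessing an essential family of two pairs of disjoint closed sets, and let μ : C(X) → ℝ be a Whitney map. Then there is s > 0 such that for every r with 0 < r < s, the Whitney level μ⁻¹(r) (with the Vietoris topology) cannot be topologically embedded into the cube [0,1]^n for any natural number n; in particular μ⁻¹(r) is infinite-dimensional. -/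
open Set

open Set Topology TopologicalSpace

theorem aux_isClosed_connected (X : Type*) [MetricSpace X] :
    IsClosed {C : NonemptyCompacts X | IsConnected (C : Set X)} := by
  rw [← isOpen_compl_iff, isOpen_iff_mem_nhds]
  intro C hC
  have hC' : ¬ IsPreconnected (C : Set X) := fun h => hC ⟨C.nonempty, h⟩
  rw [isPreconnected_iff_subset_of_fully_disjoint_closed C.isCompact.isClosed] at hC'
  push Not at hC'
  obtain ⟨u, v, hu, hv, huv, hd, hnu, hnv⟩ := hC'
  obtain ⟨U, V, hU, hV, huU, hvV, hUV⟩ := normal_separation hu hv hd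
  have h1 := NonemptyCompacts.isOpen_subsets_of_isOpen (hU.union hV)
  have h2 := NonemptyCompacts.isOpen_inter_nonempty_of_isOpen hU
  have h3 := NonemptyCompacts.isOpen_inter_nonempty_of_isOpen hV
  refine Filter.mem_of_superset (((h1.inter h2).inter h3).mem_nhds ⟨⟨?_, ?_⟩, ?_⟩) ?_
  · exact huv.trans (union_subset_union huU hvV)
  · obtain ⟨x, hx, hxv⟩ := not_subset.1 hnv
    exact ⟨x, hx, huU ((huv hx).resolve_right hxv)⟩
  · obtain ⟨x, hx, hxv⟩ := not_subset.1 hnu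
    exact ⟨x, hx, hvV ((huv hx).resolve_left hxv)⟩
  · rintro K ⟨⟨hK1, hK2⟩, hK3⟩ hK
    obtain ⟨x, -, hx⟩ := hK.isPreconnected U V hU hV hK1 hK2 hK3
    exact hUV.le_bot hx

instance aux_compact_hyp (X : Type*) [MetricSpace X] [CompactSpace X] :
    CompactSpace (SubcontinuaHyp X) :=
  isCompact_iff_compactSpace.1 (aux_isClosed_connected X).isCompact

theorem aux_clopen_sep {L : Type*} [TopologicalSpace L] [CompactSpace L] [T2Space L]
    {A B : Set L} (hA : IsClosed A) (hB : IsClosed B)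
    (h : ∀ x ∈ A, ∀ y ∈ B, y ∉ connectedComponent x) :
    ∃ D : Set L, IsClopen D ∧ A ⊆ D ∧ B ⊆ Dᶜ := by
  have hq : Continuous (ConnectedComponents.mk : L → ConnectedComponents L) :=
    ConnectedComponents.continuous_coe
  have hA' := (hA.isCompact.image hq).isClosed
  have hB' := (hB.isCompact.image hq).isClosed
  obtain ⟨C, hC, hAC, hCB⟩ := exists_clopen_of_closed_subset_open hA' hB'.isOpen_compl (by
    rintro _ ⟨x, hx, rfl⟩ ⟨y, hy, hxy⟩
    exact h x hx y hy (ConnectedComponents.coe_eq_coe'.1 hxy))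
  refine ⟨_, hC.preimage hq, fun x hx => hAC ⟨x, hx, rfl⟩, fun y hy hyC => hCB hyC ⟨y, hy, rfl⟩⟩

theorem aux_split {X : Type*} [MetricSpace X] [CompactSpace X] {L A B : Set X}
    (hL : IsClosed L) (hA : IsClosed A) (hB : IsClosed B)
    (h : ∀ K ⊆ L, IsCompact K → IsConnected K → (K ∩ A).Nonempty → (K ∩ B).Nonempty → False) :
    ∃ L1 L2 : Set X, IsClosed L1 ∧ IsClosed L2 ∧ Disjoint L1 L2 ∧ L = L1 ∪ L2 ∧
      A ∩ L ⊆ L1 ∧ B ∩ L ⊆ L2 := by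
  have : CompactSpace L := isCompact_iff_compactSpace.1 hL.isCompact
  obtain ⟨D, hD, hAD, hBD⟩ := aux_clopen_sep (L := L) (A := (↑) ⁻¹' A) (B := (↑) ⁻¹' B)
    (hA.preimage continuous_subtype_val) (hB.preimage continuous_subtype_val) (by
      intro x hx y hy hxy
      refine h ((↑) '' connectedComponent x) (by simp) ?_ ?_ ⟨x, ?_, hx⟩ ⟨y, ⟨y, hxy, rfl⟩, hy⟩
      · exact isClosed_connectedComponent.isCompact.image continuous_subtype_val
      · exact isConnected_connectedComponent.image _ continuous_subtype_val.continuousOn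
      · exact ⟨x, mem_connectedComponent, rfl⟩)
  refine ⟨(↑) '' D, (↑) '' Dᶜ, hL.isClosedEmbedding_subtypeVal.isClosedMap _ hD.1,
    hL.isClosedEmbedding_subtypeVal.isClosedMap _ hD.compl.1, ?_, ?_, ?_, ?_⟩
  · exact (disjoint_image_iff Subtype.val_injective).2 disjoint_compl_right
  · rw [← image_union, union_compl_self]; simp
  · rintro x ⟨hx, hxL⟩
    exact ⟨⟨x, hxL⟩, hAD hx, rfl⟩
  · rintro x ⟨hx, hxL⟩
    exact ⟨⟨x, hxL⟩, hBD hx, rfl⟩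

theorem aux_big_continuum {X : Type*} [MetricSpace X] [CompactSpace X]
    {A B : Fin 2 → Set X} (hAB : IsEssentialFamily A B) {L : Set X}
    (hL : IsPartitionBetween L (A 0) (B 0)) :
    ∃ K ⊆ L, IsCompact K ∧ IsConnected K ∧ (K ∩ A 1).Nonempty ∧ (K ∩ B 1).Nonempty := by
  by_contra hcon
  push Not at hcon
  obtain ⟨hA, hB, hd, hess⟩ := hAB
  obtain ⟨L1, L2, h1, h2, h12, hL12, hA1, hB2⟩ := aux_split hL.1 (hA 1) (hB 1)
    (fun K hK hc hcc ha hb => hb.ne_empty (hcon K hK hc hcc ha))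
  have hdis : Disjoint (A 1 ∪ L1) (B 1 ∪ L2) := by
    rw [Set.disjoint_left]
    rintro x (hx | hx) (hy | hy)
    · exact (hd 1).le_bot ⟨hx, hy⟩
    · exact h12.le_bot ⟨hA1 ⟨hx, hL12 ▸ Or.inr hy⟩, hy⟩
    · exact h12.le_bot ⟨hx, hB2 ⟨hy, hL12 ▸ Or.inl hx⟩⟩
    · exact h12.le_bot ⟨hx, hy⟩
  obtain ⟨U, V, hU, hV, hAU, hBV, hUV⟩ :=
    normal_separation ((hA 1).union h1) ((hB 1).union h2) hdis
  obtain ⟨x, hx⟩ := hess ![L, (U ∪ V)ᶜ] (by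
    intro i
    fin_cases i
    · exact hL
    · exact ⟨(hU.union hV).isClosed_compl, U, V, hU, hV, hUV,
        subset_union_left.trans hAU, subset_union_left.trans hBV, compl_compl _⟩)
  have hx0 : x ∈ L := mem_iInter.1 hx 0
  have hx1 : x ∈ (U ∪ V)ᶜ := mem_iInter.1 hx 1
  rw [hL12] at hx0
  rcases hx0 with h | h
  · exact hx1 (Or.inl (hAU (Or.inr h)))
  · exact hx1 (Or.inr (hBV (Or.inr h)))

/-- Whitney levels: through every point there is a member of the level. -/
theorem aux_level_exists {X : Type*} [MetricSpace X] [CompactSpace X] [ConnectedSpace X]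
    (hX : HereditarilyIndecomposable X)
    (μ : SubcontinuaHyp X → ℝ) (hμcont : Continuous μ)
    (hμ0 : ∀ (C : SubcontinuaHyp X) (x : X), (C.1 : Set X) = {x} → μ C = 0)
    (hμmono : ∀ C D : SubcontinuaHyp X, (C.1 : Set X) ⊂ (D.1 : Set X) → μ C < μ D)
    (r : ℝ) (hr : 0 < r) (K : SubcontinuaHyp X) (hK : r < μ K) (x : X) :
    ∃ C : SubcontinuaHyp X, μ C = r ∧ x ∈ (C.1 : Set X) := by
  let S : Set (SubcontinuaHyp X) := {C | ((C.1 : Set X) ∩ {x}).Nonempty ∧ μ C ≤ r}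
  have hS : IsCompact S := by
    refine IsClosed.isCompact (IsClosed.inter ?_ (isClosed_le hμcont continuous_const))
    exact (NonemptyCompacts.isClosed_inter_nonempty_of_isClosed isClosed_singleton).preimage
      continuous_subtype_val
  have hSne : S.Nonempty := by
    let P : SubcontinuaHyp X := ⟨⟨⟨{x}, isCompact_singleton⟩, singleton_nonempty x⟩,
      isConnected_singleton⟩
    refine ⟨P, ⟨x, rfl, rfl⟩, ?_⟩
    rw [hμ0 P x rfl]; exact hr.le
  obtain ⟨C0, ⟨⟨x', hx', hxx⟩, hC0r⟩, hmax⟩ := hS.exists_isMaxOn hSne hμcont.continuousOn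
  obtain rfl : x' = x := hxx
  refine ⟨C0, ?_, hx'⟩
  by_contra hne
  have hlt : μ C0 < r := lt_of_le_of_ne hC0r hne
  have hz : ∃ z, z ∉ (C0.1 : Set X) := by
    by_contra hz
    push Not at hz
    by_cases h : (K.1 : Set X) = (C0.1 : Set X)
    · have : K = C0 := Subtype.ext (SetLike.coe_injective h)
      rw [this] at hK; linarith
    · have := hμmono K C0 ⟨fun y _ => hz y, fun h' => h (Subset.antisymm (fun y _ => hz y) h')⟩
      linarith
  obtain ⟨z, hz⟩ := hz
  have hev : ∀ᶠ D in 𝓝 C0, μ D < r := hμcont.continuousAt.eventually_lt_const hlt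
  obtain ⟨ε, hε, hball⟩ := Metric.eventually_nhds_iff.1 hev
  -- choose the neighbourhood W
  have hopen : IsOpen (Metric.thickening (ε/2) (C0.1 : Set X) ∩ {z}ᶜ) :=
    Metric.isOpen_thickening.inter isOpen_compl_singleton
  obtain ⟨W, hW, hCW, hWU⟩ := normal_exists_closure_subset C0.1.isCompact.isClosed hopen
    (subset_inter (Metric.self_subset_thickening (by positivity) _)
      (fun y hy h => hz (by rw [← mem_singleton_iff.1 h]; exact hy)))
  have : ∃ D ⊆ closure W, IsCompact D ∧ IsConnected D ∧ (D ∩ (C0.1 : Set X)).Nonempty ∧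
      (D ∩ Wᶜ).Nonempty := by
    by_contra hcon
    push Not at hcon
    obtain ⟨L1, L2, h1, h2, h12, hL12, hA1, hB2⟩ := aux_split isClosed_closure
      C0.1.isCompact.isClosed hW.isClosed_compl
      (fun K hK hc hcc ha hb => hb.ne_empty (hcon K hK hc hcc ha))
    have hL1W : L1 = W \ L2 := by
      ext y
      constructor
      · intro hy
        have hy2 : y ∉ L2 := fun h => h12.le_bot ⟨hy, h⟩
        refine ⟨?_, hy2⟩
        by_contra hyW
        exact hy2 (hB2 ⟨hyW, hL12 ▸ Or.inl hy⟩)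
      · rintro ⟨hy, hy2⟩
        have : y ∈ L1 ∪ L2 := hL12 ▸ subset_closure hy
        exact this.resolve_right hy2
    have hclopen : IsClopen L1 := ⟨h1, by rw [hL1W]; exact hW.sdiff h2⟩
    rcases isClopen_iff.1 hclopen with h | h
    · have : x' ∈ L1 := hA1 ⟨hx', subset_closure (hCW hx')⟩
      rw [h] at this; exact this
    · have : z ∈ L1 := by rw [h]; trivial
      rw [hL1W] at this
      exact (hWU (subset_closure this.1)).2 rfl
  obtain ⟨D, hDW, hDc, hDcc, hDC, hDnW⟩ := this
  have hCD : (C0.1 : Set X) ⊆ D := by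
    rcases hX _ _ hDc hDcc C0.1.isCompact C0.2 hDC with h | h
    · obtain ⟨y, hy, hyW⟩ := hDnW
      exact absurd (hCW (h hy)) hyW
    · exact h
  let D' : SubcontinuaHyp X := ⟨⟨⟨D, hDc⟩, hDcc.nonempty⟩, hDcc⟩
  have hD1 : μ C0 < μ D' := hμmono _ _ ⟨hCD, fun h => by
    obtain ⟨y, hy, hyW⟩ := hDnW
    exact hyW (hCW (h hy))⟩
  have hD2 : μ D' < r := by
    apply hball
    have : dist D' C0 ≤ ε / 2 := by
      rw [Subtype.dist_eq, Metric.NonemptyCompacts.dist_eq]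
      refine Metric.hausdorffDist_le_of_mem_dist (by positivity) ?_ ?_
      · intro y hy
        obtain ⟨w, hw, hd⟩ := Metric.mem_thickening_iff.1 (hWU (hDW hy)).1
        exact ⟨w, hw, hd.le⟩
      · intro y hy
        exact ⟨y, hCD hy, by simp; positivity⟩
    linarith
  have := hmax (show D' ∈ S from ⟨⟨x', hCD hx', rfl⟩, hD2.le⟩)
  exact absurd hD1 (not_lt.2 this)

/-- Functional form of the absence of an essential family of `m` pairs. -/
def AuxNoEss (Y : Type*) [TopologicalSpace Y] (m : ℕ) : Prop :=
  ∀ C D : Fin m → Set Y, (∀ i, IsClosed (C i)) → (∀ i, IsClosed (D i)) →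
    (∀ i, Disjoint (C i) (D i)) → ∃ e : Fin m → Y → ℝ, (∀ i, Continuous (e i)) ∧
      (∀ i, ∀ y ∈ C i, e i y < 0) ∧ (∀ i, ∀ y ∈ D i, 0 < e i y) ∧ ∀ y, ∃ i, e i y ≠ 0

theorem aux_pos_fun {Y : Type*} [MetricSpace Y] {V : Set Y} (hV : IsOpen V) :
    ∃ f : Y → ℝ, Continuous f ∧ (∀ y ∈ V, 0 < f y) ∧ ∀ y ∉ V, f y = 0 := by
  refine ⟨fun y => (min 1 (Metric.infEDist y Vᶜ)).toReal, ?_, ?_, ?_⟩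
  · rw [continuous_iff_continuousAt]
    intro y
    refine (ENNReal.continuousAt_toReal ?_).comp
      (continuous_const.min Metric.continuous_infEDist).continuousAt
    exact ne_top_of_le_ne_top ENNReal.one_ne_top (min_le_left _ _)
  · intro y hy
    apply ENNReal.toReal_pos
    · have : Metric.infEDist y Vᶜ ≠ 0 := by
        intro h
        have := (Metric.mem_iff_infEDist_zero_of_closed hV.isClosed_compl).2 h
        exact this hy
      exact (lt_min zero_lt_one (pos_iff_ne_zero.2 this)).ne'
    · exact ne_top_of_le_ne_top ENNReal.one_ne_top (min_le_left _ _)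
  · intro y hy
    have : Metric.infEDist y Vᶜ = 0 := Metric.infEDist_zero_of_mem hy
    simp [this]

theorem aux_noEss {Y : Type*} [MetricSpace Y] {m : ℕ}
    (h : ¬ ∃ A' B' : Fin m → Set Y, IsEssentialFamily A' B') : AuxNoEss Y m := by
  intro C D hC hD hCD
  have : ¬ ∀ L : Fin m → Set Y, (∀ i, IsPartitionBetween (L i) (C i) (D i)) →
      (⋂ i, L i).Nonempty := fun h' => h ⟨C, D, hC, hD, hCD, h'⟩
  push Not at this
  obtain ⟨L, hL, hLe⟩ := this
  choose hLc U V hU hV hUV hCU hDV hUVL using hL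
  choose f hf hfp hfz using fun i => aux_pos_fun (hU i)
  choose g hg hgp hgz using fun i => aux_pos_fun (hV i)
  refine ⟨fun i y => g i y - f i y, fun i => (hg i).sub (hf i), ?_, ?_, ?_⟩
  · intro i y hy
    have h1 := hfp i y (hCU i hy)
    have h2 := hgz i y (fun h => (hUV i).le_bot ⟨hCU i hy, h⟩)
    simp only; linarith
  · intro i y hy
    have h1 := hgp i y (hDV i hy)
    have h2 := hfz i y (fun h => (hUV i).le_bot ⟨h, hDV i hy⟩)
    simp only; linarith
  · intro y
    have : y ∉ ⋂ i, L i := by rw [hLe]; exact notMem_empty y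
    rw [mem_iInter] at this
    push Not at this
    obtain ⟨i, hi⟩ := this
    refine ⟨i, ?_⟩
    have hy : y ∈ U i ∪ V i := by rw [← hUVL i]; exact hi
    rcases hy with hy | hy
    · have h1 := hfp i y hy
      have h2 := hgz i y (fun h => (hUV i).le_bot ⟨hy, h⟩)
      simp only; linarith
    · have h1 := hgp i y hy
      have h2 := hfz i y (fun h => (hUV i).le_bot ⟨h, hy⟩)
      simp only; linarith

theorem aux_open_pair {X Y D : Type*} [MetricSpace X] [TopologicalSpace Y] [TopologicalSpace D]
    {P : Y → NonemptyCompacts X} (hP : Continuous P) {W : Set (X × X × D)} (hW : IsOpen W) :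
    IsOpen {p : Y × D | ∃ x ∈ (P p.1 : Set X), ∃ x' ∈ (P p.1 : Set X), (x, x', p.2) ∈ W} := by
  rw [isOpen_iff_mem_nhds]
  rintro ⟨y, d⟩ ⟨x, hx, x', hx', hw⟩
  obtain ⟨U, hU, T, hT, hUT⟩ := mem_nhds_prod_iff.1 (hW.mem_nhds hw)
  obtain ⟨V, hV, E, hE, hVE⟩ := mem_nhds_prod_iff.1 hT
  obtain ⟨U', hUU, hU', hxU⟩ := mem_nhds_iff.1 hU
  obtain ⟨V', hVV, hV', hxV⟩ := mem_nhds_iff.1 hV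
  have h1 := (NonemptyCompacts.isOpen_inter_nonempty_of_isOpen hU').preimage hP
  have h2 := (NonemptyCompacts.isOpen_inter_nonempty_of_isOpen hV').preimage hP
  have h3 := (h1.inter h2).mem_nhds (show y ∈ _ from ⟨⟨x, hx, hxU⟩, ⟨x', hx', hxV⟩⟩)
  refine Filter.mem_of_superset (prod_mem_nhds h3 hE) ?_
  rintro ⟨y', d'⟩ ⟨⟨⟨a, ha, haU⟩, ⟨b, hb, hbV⟩⟩, hd'⟩
  exact ⟨a, ha, b, hb, hUT ⟨hUU haU, hVE ⟨hVV hbV, hd'⟩⟩⟩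

theorem aux_open_pair' {X Y : Type*} [MetricSpace X] [TopologicalSpace Y]
    {P : Y → NonemptyCompacts X} (hP : Continuous P) {g : X → ℝ} (hg : Continuous g) (c : ℝ) :
    IsOpen {y : Y | ∃ x ∈ (P y : Set X), ∃ x' ∈ (P y : Set X), c < |g x - g x'|} := by
  have h := aux_open_pair (D := Unit) hP
    (W := {p | c < |g p.1 - g p.2.1|}) (isOpen_lt continuous_const (by fun_prop))
  exact h.preimage (f := fun y => (y, ())) (by fun_prop)

theorem aux_stable {X Y : Type*} [MetricSpace X] [TopologicalSpace Y]
    {P : Y → NonemptyCompacts X} (hP : Continuous P) {g : X → ℝ} (hg : Continuous g)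
    {M : Set Y} (hM : IsCompact M)
    (h : ∀ y ∈ M, ∃ x ∈ (P y : Set X), ∃ x' ∈ (P y : Set X), g x ≠ g x') :
    ∃ δ > 0, ∀ g' : X → ℝ, (∀ x, |g' x - g x| ≤ δ) →
      ∀ y ∈ M, ∃ x ∈ (P y : Set X), ∃ x' ∈ (P y : Set X), g' x ≠ g' x' := by
  obtain ⟨n, hn⟩ := hM.elim_directed_cover
    (fun n : ℕ => {y : Y | ∃ x ∈ (P y : Set X), ∃ x' ∈ (P y : Set X),
      1 / ((n : ℝ) + 1) < |g x - g x'|})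
    (fun n => aux_open_pair' hP hg _) (by
      intro y hy
      obtain ⟨x, hx, x', hx', hne⟩ := h y hy
      obtain ⟨n, hn⟩ := exists_nat_one_div_lt (abs_pos.2 (sub_ne_zero.2 hne))
      exact mem_iUnion.2 ⟨n, x, hx, x', hx', hn⟩)
    (directed_of_isDirected_le (by
      rintro a b hab y ⟨x, hx, x', hx', hlt⟩
      exact ⟨x, hx, x', hx', (Nat.one_div_le_one_div hab).trans_lt hlt⟩))
  have hpos : (0 : ℝ) < 1 / ((n : ℝ) + 1) := by positivity
  refine ⟨1 / ((n : ℝ) + 1) / 2, by positivity, ?_⟩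
  intro g' hg' y hy
  obtain ⟨x, hx, x', hx', hlt⟩ := hn hy
  refine ⟨x, hx, x', hx', fun heq => ?_⟩
  have h1 := hg' x
  have h2 := hg' x'
  have : g x - g x' = (g' x' - g x') - (g' x - g x) := by rw [heq]; ring
  rw [this] at hlt
  have := abs_sub (g' x' - g x') (g' x - g x)
  linarith

theorem aux_poly {X : Type*} [TopologicalSpace X] {S : Set X} (hS : IsPreconnected S) {h : X → ℝ}
    (hh : Continuous h) (hne : ∃ x ∈ S, ∃ x' ∈ S, h x ≠ h x') {m : ℕ} {d : Fin m → ℝ}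
    (hd : ∀ x ∈ S, ∀ x' ∈ S, ∑ j, d j * h x ^ (j.1 + 1) = ∑ j, d j * h x' ^ (j.1 + 1)) :
    d = 0 := by
  obtain ⟨x, hx, x', hx', hne⟩ := hne
  let p : Polynomial ℝ := ∑ j, Polynomial.C (d j) * Polynomial.X ^ (j.1 + 1)
  have hp : ∀ t, p.eval t = ∑ j, d j * t ^ (j.1 + 1) := by
    intro t; simp [p, Polynomial.eval_finsetSum]
  have hinf : (h '' S).Infinite :=
    (hS.image _ hh.continuousOn).infinite_of_nontrivial
      ⟨h x, ⟨x, hx, rfl⟩, h x', ⟨x', hx', rfl⟩, hne⟩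
  have hpc : p = Polynomial.C (p.eval (h x)) := by
    apply Polynomial.eq_of_infinite_eval_eq
    refine hinf.mono ?_
    rintro _ ⟨z, hz, rfl⟩
    simp only [mem_ofPred_eq, Polynomial.eval_C, hp]
    exact hd z hz x hx
  funext i
  have := congrArg (fun q => Polynomial.coeff q (i.1 + 1)) hpc
  simp only [Polynomial.coeff_C_succ] at this
  simp only [p, Polynomial.finsetSum_coeff, Polynomial.coeff_C_mul_X_pow] at this
  rw [Finset.sum_eq_single i] at this
  · simpa using this
  · intro b _ hb
    have : i.1 + 1 ≠ b.1 + 1 := fun h => hb (Fin.ext (by omega))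
    simp [Fin.ext_iff] at *
    omega
  · simp

theorem aux_step {X Y : Type*} [MetricSpace X] [MetricSpace Y] [CompactSpace Y]
    {P : Y → NonemptyCompacts X} (hP : Continuous P) (hPc : ∀ y, IsPreconnected (P y : Set X))
    {q : X → Y} (hq : Continuous q) (hqP : ∀ y, ∀ x ∈ (P y : Set X), q x = y)
    {m : ℕ} (hm : AuxNoEss Y m) {N : Set Y} (hN : IsClosed N)
    {h : X → ℝ} (hh : Continuous h) (hh0 : ∀ x, 0 ≤ h x) (hh1 : ∀ x, h x ≤ 1)
    (hhN : ∀ y ∈ N, ∃ x ∈ (P y : Set X), ∃ x' ∈ (P y : Set X), h x ≠ h x')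
    {g : X → ℝ} (hg : Continuous g) {ε : ℝ} (hε : 0 < ε) :
    ∃ g' : X → ℝ, Continuous g' ∧ (∀ x, |g' x - g x| ≤ ε) ∧
      ∀ y ∈ N, ∃ x ∈ (P y : Set X), ∃ x' ∈ (P y : Set X), g' x ≠ g' x' := by
  obtain ⟨η, hη, hηε⟩ : ∃ η > 0, m * η ≤ ε := by
    refine ⟨ε / (m + 1), by positivity, ?_⟩
    rw [mul_div_assoc', div_le_iff₀ (by positivity)]
    nlinarith
  let F : (Fin m → ℝ) → X → ℝ := fun d x => g x - ∑ j, d j * h x ^ (j.1 + 1)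
  let Q : Set (Fin m → ℝ) := Set.pi univ (fun _ => Icc (-η) η)
  have hQ : IsCompact Q := isCompact_univ_pi (fun _ => isCompact_Icc)
  let S : Set (Y × (Fin m → ℝ)) := {p | p.1 ∈ N ∧ p.2 ∈ Q ∧
    ∀ x ∈ (P p.1 : Set X), ∀ x' ∈ (P p.1 : Set X), F p.2 x = F p.2 x'}
  have hS : IsCompact S := by
    have h1 : IsClosed {p : Y × (Fin m → ℝ) | ∀ x ∈ (P p.1 : Set X), ∀ x' ∈ (P p.1 : Set X),
        F p.2 x = F p.2 x'} := by
      have := (aux_open_pair (D := Fin m → ℝ) hP (W := {p | F p.2.2 p.1 ≠ F p.2.2 p.2.1})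
        (isOpen_ne_fun (by fun_prop) (by fun_prop))).isClosed_compl
      convert this using 1
      ext p
      simp
    have h2 : IsCompact (N ×ˢ Q) := hN.isCompact.prod hQ
    convert h2.inter_right h1 using 1
    ext p
    simp [S, and_assoc]
  have huniq : ∀ y d d', (y, d) ∈ S → (y, d') ∈ S → d = d' := by
    intro y d d' hd hd'
    rw [← sub_eq_zero]
    refine aux_poly (hPc y) hh (hhN y hd.1) ?_
    intro x hx x' hx'
    have e1 := hd.2.2 x hx x' hx'
    have e2 := hd'.2.2 x hx x' hx'
    simp only [F] at e1 e2
    simp only [Pi.sub_apply, sub_mul, Finset.sum_sub_distrib]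
    linarith
  have hclosed : ∀ (c : ℝ) (i : Fin m), IsClosed (Prod.fst '' (S ∩ {p | p.2 i = c})) := by
    intro c i
    refine IsCompact.isClosed ((hS.inter_right ?_).image continuous_fst)
    exact isClosed_eq (by fun_prop) continuous_const
  obtain ⟨e, he, heC, heD, hez⟩ := hm (fun i => Prod.fst '' (S ∩ {p | p.2 i = -η}))
    (fun i => Prod.fst '' (S ∩ {p | p.2 i = η})) (hclosed _) (hclosed _) (by
      intro i
      rw [Set.disjoint_left]
      rintro _ ⟨⟨y, d⟩, ⟨hS1, hd1⟩, rfl⟩ ⟨⟨y', d'⟩, ⟨hS2, hd2⟩, hyy⟩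
      simp only at hyy
      subst hyy
      have := huniq _ _ _ hS1 hS2
      subst this
      simp only [mem_ofPred_eq] at hd1 hd2
      linarith)
  let E : Y → (Fin m → ℝ) := fun y i => e i y
  have hE : Continuous E := continuous_pi he
  have hE0 : ∀ y, 0 < ‖E y‖ := by
    intro y
    obtain ⟨i, hi⟩ := hez y
    exact norm_pos_iff.2 (fun h => hi (congrFun h i))
  let ψ : Y → (Fin m → ℝ) := fun y i => -(η * e i y / ‖E y‖)
  have hψ : Continuous ψ := continuous_pi (fun i =>
    ((continuous_const.mul (he i)).div hE.norm (fun y => (hE0 y).ne')).neg)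
  have hψb : ∀ y i, |ψ y i| ≤ η := by
    intro y i
    simp only [ψ, abs_neg, abs_div, abs_mul, abs_norm, abs_of_pos hη]
    rw [div_le_iff₀ (hE0 y)]
    have : |e i y| ≤ ‖E y‖ := norm_le_pi_norm (E y) i
    gcongr
  have hψS : ∀ y, (y, ψ y) ∉ S := by
    intro y hy
    obtain ⟨i0, _⟩ := hez y
    have : Nonempty (Fin m) := ⟨i0⟩
    obtain ⟨i, hi⟩ : ∃ i, |e i y| = ‖E y‖ := by
      obtain ⟨i, hi⟩ := Finite.exists_max (fun i => |e i y|)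
      refine ⟨i, le_antisymm (norm_le_pi_norm (E y) i) ?_⟩
      exact (pi_norm_le_iff_of_nonneg (abs_nonneg _)).2 hi
    have hp := hE0 y
    rcases le_total 0 (e i y) with hs | hs
    · rw [abs_of_nonneg hs] at hi
      have h1 : ψ y i = -η := by
        simp only [ψ, hi]; field_simp
      have := heC i y ⟨(y, ψ y), ⟨hy, h1⟩, rfl⟩
      linarith
    · rw [abs_of_nonpos hs] at hi
      have h1 : ψ y i = η := by
        simp only [ψ, ← hi]
        have : e i y ≠ 0 := by intro h0; rw [h0] at hi; simp at hi; linarith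
        field_simp
      have := heD i y ⟨(y, ψ y), ⟨hy, h1⟩, rfl⟩
      linarith
  refine ⟨fun x => F (ψ (q x)) x, ?_, ?_, ?_⟩
  · simp only [F]
    refine hg.sub (continuous_finsetSum _ fun j _ => ?_)
    exact ((continuous_apply j).comp (hψ.comp hq)).mul (hh.pow _)
  · intro x
    have : F (ψ (q x)) x - g x = - ∑ j, ψ (q x) j * h x ^ (j.1 + 1) := by simp [F]
    rw [this, abs_neg]
    refine (Finset.abs_sum_le_sum_abs _ _).trans ?_
    refine (Finset.sum_le_card_nsmul _ _ η ?_).trans (by simpa using hηε)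
    intro j _
    rw [abs_mul, abs_of_nonneg (pow_nonneg (hh0 x) _)]
    have := pow_le_one₀ (n := j.1 + 1) (hh0 x) (hh1 x)
    have := hψb (q x) j
    have h0 := pow_nonneg (hh0 x) (j.1 + 1)
    nlinarith [abs_nonneg (ψ (q x) j)]
  · intro y hy
    by_contra hcon
    push Not at hcon
    refine hψS y ⟨hy, ?_, ?_⟩
    · intro i _
      exact abs_le.1 (hψb y i)
    · intro x hx x' hx'
      have := hcon x hx x' hx'
      rwa [hqP y x hx, hqP y x' hx'] at this

theorem aux_perturb {X Y : Type*} [MetricSpace X] [MetricSpace Y] [CompactSpace Y]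
    {P : Y → NonemptyCompacts X} (hP : Continuous P) (hPc : ∀ y, IsPreconnected (P y : Set X))
    (hPn : ∀ y, ∃ x ∈ (P y : Set X), ∃ x' ∈ (P y : Set X), x ≠ x')
    {q : X → Y} (hq : Continuous q) (hqP : ∀ y, ∀ x ∈ (P y : Set X), q x = y)
    {m : ℕ} (hm : AuxNoEss Y m)
    {g : X → ℝ} (hg : Continuous g) {ε : ℝ} (hε : 0 < ε) :
    ∃ g' : X → ℝ, Continuous g' ∧ (∀ x, |g' x - g x| ≤ ε) ∧
      ∀ y, ∃ x ∈ (P y : Set X), ∃ x' ∈ (P y : Set X), g' x ≠ g' x' := by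
  choose a ha b hb hab using hPn
  let h : Y → X → ℝ := fun y x => min 1 (dist x (a y))
  have hh : ∀ y, Continuous (h y) := fun y => by fun_prop
  have hloc : ∀ y, ∃ N : Set Y, N ∈ 𝓝 y ∧ IsClosed N ∧
      ∀ y' ∈ N, ∃ x ∈ (P y' : Set X), ∃ x' ∈ (P y' : Set X), h y x ≠ h y x' := by
    intro y
    have hop := aux_open_pair' hP (hh y) 0
    obtain ⟨N, hN, hNc, hNs⟩ := exists_mem_nhds_isClosed_subset (hop.mem_nhds (show y ∈ _ from
      ⟨a y, ha y, b y, hb y, by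
        have : dist (b y) (a y) > 0 := dist_pos.2 (hab y).symm
        have : (0:ℝ) < min 1 (dist (b y) (a y)) := lt_min one_pos this
        simp only [h, dist_self]
        rw [abs_pos, min_eq_right (by norm_num : (0:ℝ) ≤ 1)]
        linarith⟩))
    refine ⟨N, hN, hNc, fun y' hy' => ?_⟩
    obtain ⟨x, hx, x', hx', hlt⟩ := hNs hy'
    exact ⟨x, hx, x', hx', sub_ne_zero.1 (abs_pos.1 hlt)⟩
  choose N hN hNc hNh using hloc
  obtain ⟨t, ht⟩ := finite_cover_nhds hN
  have key : ∀ t : Finset Y, ∀ ε > 0, ∃ g' : X → ℝ, Continuous g' ∧ (∀ x, |g' x - g x| ≤ ε) ∧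
      ∀ y ∈ ⋃ i ∈ t, N i, ∃ x ∈ (P y : Set X), ∃ x' ∈ (P y : Set X), g' x ≠ g' x' := by
    classical
    intro t
    induction t using Finset.induction_on with
    | empty => intro ε hε; exact ⟨g, hg, fun x => by simp [hε.le], by simp⟩
    | insert y0 t _ ih =>
      intro ε hε
      obtain ⟨g1, hg1, hg1e, hg1n⟩ := ih (ε / 2) (by positivity)
      have hM : IsCompact (⋃ i ∈ t, N i) :=
        (t.finite_toSet.isClosed_biUnion (fun i _ => hNc i)).isCompact
      obtain ⟨δ, hδ, hst⟩ := aux_stable hP hg1 hM hg1n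
      obtain ⟨g2, hg2, hg2e, hg2n⟩ := aux_step hP hPc hq hqP hm (hNc y0) (hh y0)
        (fun x => le_min zero_le_one dist_nonneg) (fun x => min_le_left _ _) (hNh y0) hg1
        (ε := min (ε / 2) δ) (lt_min (by positivity) hδ)
      refine ⟨g2, hg2, fun x => ?_, fun y hy => ?_⟩
      · have h1 := hg1e x
        have h2 := (hg2e x).trans (min_le_left _ _)
        have := abs_sub_le (g2 x) (g1 x) (g x)
        linarith
      · rw [Finset.set_biUnion_insert] at hy
        rcases hy with hy | hy
        · exact hg2n y hy
        · exact hst g2 (fun x => (hg2e x).trans (min_le_right _ _)) y hy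
  obtain ⟨g', h1, h2, h3⟩ := key t ε hε
  exact ⟨g', h1, h2, fun y => h3 y (by rw [ht]; trivial)⟩

theorem aux_cube {Y : Type*} [MetricSpace Y] [CompactSpace Y] {n : ℕ}
    {f : Y → (Fin n → unitInterval)} (hf : Continuous f) (hinj : Function.Injective f)
    (C D : Fin (n + 1) → Set Y) : ¬ IsEssentialFamily C D := by
  rintro ⟨hC, hD, hCD, hess⟩
  let c : Y → (Fin n → ℝ) := fun y i => (f y i : ℝ)
  have hc : Continuous c := by fun_prop
  let S : Subalgebra ℝ C(Y, ℝ) :=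
    { carrier := {φ | ∃ G : (Fin n → ℝ) → ℝ, ContDiff ℝ 1 G ∧ ∀ y, φ y = G (c y)}
      mul_mem' := by
        rintro a b ⟨G, hG, h1⟩ ⟨H, hH, h2⟩
        exact ⟨fun z => G z * H z, hG.mul hH, fun y => by simp [h1, h2]⟩
      add_mem' := by
        rintro a b ⟨G, hG, h1⟩ ⟨H, hH, h2⟩
        exact ⟨fun z => G z + H z, hG.add hH, fun y => by simp [h1, h2]⟩
      algebraMap_mem' := fun t => ⟨fun _ => t, contDiff_const, fun y => by simp⟩ }
  have hsep : S.SeparatesPoints := by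
    intro y y' hne
    have : f y ≠ f y' := fun h => hne (hinj h)
    obtain ⟨i, hi⟩ := Function.ne_iff.1 this
    refine ⟨fun y => c y i, ⟨⟨fun y => c y i, by fun_prop⟩, ⟨fun z => z i, by fun_prop,
      fun y => rfl⟩, rfl⟩, fun h => hi (Subtype.ext h)⟩
  have hur : ∀ i, ∃ G : (Fin n → ℝ) → ℝ, ContDiff ℝ 1 G ∧ (∀ y ∈ C i, G (c y) < 1 / 4) ∧
      ∀ y ∈ D i, 3 / 4 < G (c y) := by
    intro i
    obtain ⟨u, hu0, hu1, -⟩ := exists_continuous_zero_one_of_isClosed (hC i) (hD i) (hCD i)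
    obtain ⟨⟨v, G, hG, hv⟩, hvu⟩ :=
      ContinuousMap.exists_mem_subalgebra_near_continuousMap_of_separatesPoints S hsep u (1 / 4)
        (by norm_num)
    have hb : ∀ y, |v y - u y| < 1 / 4 := fun y =>
      ((v - u).norm_coe_le_norm y).trans_lt hvu
    refine ⟨G, hG, fun y hy => ?_, fun y hy => ?_⟩
    · have h1 := abs_lt.1 (hb y)
      have h2 : u y = 0 := hu0 hy
      rw [← hv]; linarith [h1.1, h1.2]
    · have h1 := abs_lt.1 (hb y)
      have h2 : u y = 1 := hu1 hy
      rw [← hv]; linarith [h1.1, h1.2]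
  choose G hG hGC hGD using hur
  have hGc : ContDiff ℝ 1 (fun z => fun i => G i z) := contDiff_pi.2 hG
  have hdense := hGc.dense_compl_range_of_finrank_lt_finrank (by simp)
  obtain ⟨v, hv, hvr⟩ := hdense.exists_dist_lt (fun _ : Fin (n + 1) => (1 / 2 : ℝ))
    (show (0 : ℝ) < 1 / 4 by norm_num)
  have hvb : ∀ i, 1 / 4 < v i ∧ v i < 3 / 4 := by
    intro i
    have h1 := (dist_le_pi_dist (fun _ : Fin (n + 1) => (1 / 2 : ℝ)) v i).trans_lt hvr
    rw [Real.dist_eq] at h1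
    have := abs_lt.1 h1
    constructor <;> linarith [this.1, this.2]
  have hcont : ∀ i, Continuous fun y => G i (c y) := fun i => (hG i).continuous.comp hc
  obtain ⟨y, hy⟩ := hess (fun i => {y | G i (c y) = v i}) (by
    intro i
    refine ⟨isClosed_eq (hcont i) continuous_const, {y | G i (c y) < v i}, {y | v i < G i (c y)},
      isOpen_lt (hcont i) continuous_const, isOpen_lt continuous_const (hcont i), ?_, ?_, ?_, ?_⟩
    · rw [Set.disjoint_left]
      intro y h1 h2
      exact lt_asymm (show G i (c y) < v i from h1) h2
    · intro y hy
      exact (hGC i y hy).trans (hvb i).1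
    · intro y hy
      exact (hvb i).2.trans (hGD i y hy)
    · ext y
      exact ne_iff_lt_or_gt)
  exact hv ⟨c y, funext fun i => mem_iInter.1 hy i⟩

/-- Kelley: in an at least two-dimensional hereditarily indecomposable metric continuum,
all sufficiently low Whitney levels embed in no finite-dimensional cube; in particular
they are infinite-dimensional. -/
theorem small_whitney_levels_infinite_dimensional
    (X : Type*) [MetricSpace X] [CompactSpace X] [ConnectedSpace X]
    (hX : HereditarilyIndecomposable X)
    (A B : Fin 2 → Set X) (hAB : IsEssentialFamily A B)
    (μ : SubcontinuaHyp X → ℝ) (hμcont : Continuous μ)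
    (hμ0 : ∀ (C : SubcontinuaHyp X) (x : X), (C.1 : Set X) = {x} → μ C = 0)
    (hμmono : ∀ C D : SubcontinuaHyp X, (C.1 : Set X) ⊂ (D.1 : Set X) → μ C < μ D) :
    ∃ s : ℝ, 0 < s ∧ ∀ r : ℝ, 0 < r → r < s →
      (∀ n : ℕ, ¬ ∃ f : {C : SubcontinuaHyp X // μ C = r} → (Fin n → unitInterval),
        Topology.IsEmbedding f) ∧
      (∀ m : ℕ, ∃ A' B' : Fin m → Set {C : SubcontinuaHyp X // μ C = r},
        IsEssentialFamily A' B') := by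

  have hA := hAB.1
  have hB := hAB.2.1
  have hd := hAB.2.2.1
  -- the continua joining `A 1` and `B 1`
  let T : Set (SubcontinuaHyp X) := {C | ((C.1 : Set X) ∩ A 1).Nonempty ∧ ((C.1 : Set X) ∩ B 1).Nonempty}
  have hT : IsCompact T := by
    refine IsClosed.isCompact (IsClosed.inter ?_ ?_)
    · exact (NonemptyCompacts.isClosed_inter_nonempty_of_isClosed (hA 1)).preimage
        continuous_subtype_val
    · exact (NonemptyCompacts.isClosed_inter_nonempty_of_isClosed (hB 1)).preimage
        continuous_subtype_val
  have hpart : ∀ g : X → ℝ, Continuous g → (∀ x ∈ A 0, g x < 1 / 2) → (∀ x ∈ B 0, 1 / 2 < g x) →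
      ∃ K ∈ T, ∀ x ∈ (K.1 : Set X), g x = 1 / 2 := by
    intro g hg hgA hgB
    obtain ⟨K, hKL, hKc, hKcc, hKA, hKB⟩ := aux_big_continuum hAB (L := {x | g x = 1 / 2})
      ⟨isClosed_eq hg continuous_const, {x | g x < 1 / 2}, {x | 1 / 2 < g x},
        isOpen_lt hg continuous_const, isOpen_lt continuous_const hg,
        Set.disjoint_left.2 (fun y h1 h2 => lt_asymm (show g y < 1 / 2 from h1) h2), hgA, hgB, by
          ext y
          exact ne_iff_lt_or_gt⟩
    exact ⟨⟨⟨⟨K, hKc⟩, hKcc.nonempty⟩, hKcc⟩, ⟨hKA, hKB⟩, fun x hx => hKL hx⟩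
  obtain ⟨u, hu0, hu1, -⟩ := exists_continuous_zero_one_of_isClosed (hA 0) (hB 0) (hd 0)
  have hu0' : ∀ x ∈ A 0, u x = 0 := fun x hx => hu0 hx
  have hu1' : ∀ x ∈ B 0, u x = 1 := fun x hx => hu1 hx
  obtain ⟨K0, hK0T, -⟩ := hpart u u.continuous (fun x hx => by rw [hu0' x hx]; norm_num)
    (fun x hx => by rw [hu1' x hx]; norm_num)
  obtain ⟨K1, hK1T, hK1min⟩ := hT.exists_isMinOn ⟨K0, hK0T⟩ hμcont.continuousOn
  have hK1pos : 0 < μ K1 := by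
    obtain ⟨⟨a, ha, haA⟩, ⟨b, hb, hbB⟩⟩ := hK1T
    have hab : a ≠ b := fun h => (hd 1).le_bot ⟨haA, h ▸ hbB⟩
    let P : SubcontinuaHyp X := ⟨⟨⟨{a}, isCompact_singleton⟩, singleton_nonempty a⟩,
      isConnected_singleton⟩
    rw [← hμ0 P a rfl]
    refine hμmono P K1 ⟨singleton_subset_iff.2 ha, fun h => hab (h hb).symm⟩
  refine ⟨μ K1, hK1pos, fun r hr hrs => ?_⟩
  have hYc : CompactSpace {C : SubcontinuaHyp X // μ C = r} :=
    isCompact_iff_compactSpace.1 (isClosed_eq hμcont continuous_const).isCompact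
  have hess : ∀ m : ℕ, ∃ A' B' : Fin m → Set {C : SubcontinuaHyp X // μ C = r},
        IsEssentialFamily A' B' := by
    intro m
    by_contra hcon
    have hm := aux_noEss hcon
    choose C hCr hxC using aux_level_exists hX μ hμcont hμ0 hμmono r hr K1 hrs
    -- comparison in the level
    have hle : ∀ C D : SubcontinuaHyp X, (C.1 : Set X) ⊆ D.1 → μ C = μ D → C = D := by
      intro C D hCD hμ
      by_contra hne
      have : (C.1 : Set X) ⊂ D.1 := ⟨hCD, fun h => hne
        (Subtype.ext (SetLike.coe_injective (Subset.antisymm hCD h)))⟩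
      exact absurd hμ (hμmono C D this).ne
    let q : X → {C : SubcontinuaHyp X // μ C = r} := fun x => ⟨C x, hCr x⟩
    have hqu : ∀ (y : {C : SubcontinuaHyp X // μ C = r}), ∀ x ∈ (y.1.1 : Set X), q x = y := by
      intro y x hx
      apply Subtype.ext
      rcases hX _ _ (C x).1.isCompact (C x).2 y.1.1.isCompact y.1.2 ⟨x, hxC x, hx⟩ with h | h
      · exact hle _ _ h ((hCr x).trans y.2.symm)
      · exact (hle _ _ h (y.2.trans (hCr x).symm)).symm
    let P : {C : SubcontinuaHyp X // μ C = r} → NonemptyCompacts X := fun y => y.1.1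
    have hP : Continuous P := continuous_subtype_val.comp continuous_subtype_val
    have hq : Continuous q := by
      rw [continuous_iff_isClosed]
      intro F hF
      have h1 : IsCompact ((fun y => (P y).toCompacts) '' F) :=
        hF.isCompact.image (NonemptyCompacts.continuous_toCompacts.comp hP)
      have h2 := (Compacts.isCompact_biUnion_coe_of_isCompact h1).isClosed
      convert h2 using 1
      ext x
      simp only [mem_preimage, mem_iUnion, mem_image, exists_prop]
      constructor
      · intro hx
        exact ⟨_, ⟨q x, hx, rfl⟩, hxC x⟩
      · rintro ⟨_, ⟨y, hy, rfl⟩, hx⟩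
        rw [hqu y x hx]; exact hy
    have hPn : ∀ y, ∃ x ∈ (P y : Set X), ∃ x' ∈ (P y : Set X), x ≠ x' := by
      intro y
      obtain ⟨x, hx⟩ := (P y).nonempty
      by_contra hcon
      push Not at hcon
      have : (y.1.1 : Set X) = {x} := by
        ext z
        exact ⟨fun hz => (hcon x hx z hz).symm, fun hz => by rw [mem_singleton_iff.1 hz]; exact hx⟩
      have h0 := hμ0 y.1 x this
      rw [y.2] at h0
      exact hr.ne' h0
    obtain ⟨g, hg, hgu, hgn⟩ := aux_perturb hP (fun y => y.1.2.isPreconnected) hPn hq hqu hm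
      u.continuous (show (0 : ℝ) < 1 / 4 by norm_num)
    obtain ⟨K, hKT, hKg⟩ := hpart g hg
      (fun x hx => by
        have := abs_le.1 (hgu x); rw [hu0' x hx] at this; linarith [this.1, this.2])
      (fun x hx => by
        have := abs_le.1 (hgu x); rw [hu1' x hx] at this; linarith [this.1, this.2])
    have hKr : r < μ K := hrs.trans_le (hK1min hKT)
    obtain ⟨x, hx⟩ := K.1.nonempty
    have hsub : ((C x).1 : Set X) ⊆ K.1 := by
      rcases hX _ _ (C x).1.isCompact (C x).2 K.1.isCompact K.2 ⟨x, hxC x, hx⟩ with h | h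
      · exact h
      · exfalso
        by_cases heq : K = C x
        · rw [heq, hCr x] at hKr; exact lt_irrefl _ hKr
        · have : μ K < μ (C x) := hμmono _ _ ⟨h, fun h' => heq
            (Subtype.ext (SetLike.coe_injective (Subset.antisymm h h')))⟩
          rw [hCr x] at this
          exact lt_asymm hKr this
    obtain ⟨a, ha, b, hb, hab⟩ := hgn (q x)
    exact hab ((hKg a (hsub ha)).trans (hKg b (hsub hb)).symm)
  refine ⟨?_, hess⟩
  rintro n ⟨f, hf⟩
  obtain ⟨A', B', h⟩ := hess (n + 1)
  exact aux_cube hf.continuous hf.injective A' B' h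
end
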